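/- arXiv:1805.01121 — 2 statements merged into one kernel-verified Lean document; each statement's English description precedes it below -/
import Mathlib

section
/- Let n ≥ 3 be an integer, let τ be a complex number with Im(τ) > 0, set q = e^{πiτ} and τ' = -1/τ. Then (θ₁(π/n | τ'/n))² · ∏_{j=2}^{n-2} θ₁(jπ/n | τ'/n), divided by (θ₁(π/2 | τ'/n))^{n-1}, equals q^{(n-2)(n-1)/12} · ((q²; q²)_∞)² / (((q^{2n}; q^{2n})_∞)² ((q^n; q^{2n})_∞)^{2n-2}), where q^{(n-2)(n-1)/12} denotes e^{πiτ(n-2)(n-1)/12}. -/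
open Complex

/-- Infinite q-Pochhammer symbol `(a; q)_∞ = ∏_{i=0}^∞ (1 - a qⁱ)`. -/
noncomputable def qPoch (a q : ℂ) : ℂ := ∏' i : ℕ, (1 - a * q ^ i)

/-- Jacobi's first theta function
`θ₁(z | τ) = 2 ∑_{n=0}^∞ (-1)ⁿ e^{πiτ(2n+1)²/4} sin((2n+1)z)`. -/
noncomputable def theta1 (z τ : ℂ) : ℂ :=
  2 * ∑' n : ℕ, (-1 : ℂ) ^ n * Complex.exp (Real.pi * Complex.I * τ * (2 * n + 1) ^ 2 / 4) *
    Complex.sin ((2 * n + 1) * z)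

/-!
Put `σ = nτ`, `P = e^{2πiσ}` and `y = e^{2πiσt}`. Jacobi's imaginary transformation followed by
the triple product turns `θ₁(πt | -1/σ)` into a constant times
`e^{πiσ(t-1/2)²} (y; P)_∞ (P/y; P)_∞`, and the constant cancels against `θ₁(π/2 | -1/σ)`.
For `t = j/n` we get `y = q^{2j}`, so as `j` runs over `1, …, n - 1` each of the two Pochhammer
factors multiplies up to `(q²; q²)_∞ / (q^{2n}; q^{2n})_∞` (split the exponents into residue
classes mod `n`), and the Gaussian exponents add up to `πiτ(n-1)(n-2)/12`. The factor `j = n - 1`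
equals the factor `j = 1` by `θ₁(π - z) = θ₁(z)`, whence the square.

The triple product is the limit of its finite form, an expansion in Gaussian binomial coefficients
that is proved by induction: multiplying by `(1 + Q^{2N+1} x)(1 + Q^{2N+1} / x)` is the three-term
recurrence obtained by composing the two `q`-Pascal rules.
-/

open Filter Finset
open scoped Real Topology

section QPochFin

variable {R : Type*} [CommRing R]

/-- The finite `q`-Pochhammer symbol `(a; p)_n = ∏_{i<n} (1 - a pⁱ)`. -/
def qPochFin (a p : R) (n : ℕ) : R := ∏ i ∈ range n, (1 - a * p ^ i)

lemma qPochFin_succ (a p : R) (n : ℕ) : qPochFin a p (n + 1) = qPochFin a p n * (1 - a * p ^ n) :=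
  prod_range_succ _ n

lemma qPochFin_mul (a p : R) (n N : ℕ) :
    qPochFin a p (n * N) = ∏ j ∈ range n, qPochFin (a * p ^ j) (p ^ n) N := by
  induction N with
  | zero => simp [qPochFin]
  | succ N ih =>
    simp only [qPochFin_succ, prod_mul_distrib, ← ih]
    rw [mul_add_one, qPochFin, prod_range_add, ← qPochFin]
    congr! 3
    ring

end QPochFin

section QBinomial

variable {K : Type*} [Field K] {p : K}

/-- The reciprocal `1 / (p; p)_m`, extended by `0` to negative `m`: with this convention
`qPochInv_sub_one` holds for all integers `m`. -/
def qPochInv (p : K) : ℤ → K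
  | .ofNat m => (qPochFin p p m)⁻¹
  | .negSucc _ => 0

/-- The Gaussian binomial coefficient `(p; p)_n / ((p; p)_k (p; p)_{n-k})`, which vanishes unless
`0 ≤ k ≤ n`. -/
def qBinom (p : K) (n : ℕ) (k : ℤ) : K := qPochFin p p n * qPochInv p k * qPochInv p (n - k)

lemma one_sub_mul_pow_ne_zero (hp : ¬IsOfFinOrder p) (i : ℕ) : 1 - p * p ^ i ≠ 0 := fun h ↦
  hp <| isOfFinOrder_iff_pow_eq_one.mpr ⟨i + 1, i.succ_pos, by rw [pow_succ', ← sub_eq_zero.mp h]⟩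

lemma qPochInv_zero (p : K) : qPochInv p 0 = 1 := by
  simp [qPochInv, qPochFin]

lemma qPochInv_of_neg (p : K) {m : ℤ} (hm : m < 0) : qPochInv p m = 0 := by
  obtain ⟨m, rfl⟩ := Int.eq_negSucc_of_lt_zero hm
  rfl

lemma qPochInv_sub_one (hp : ¬IsOfFinOrder p) (m : ℤ) :
    qPochInv p (m - 1) = (1 - p ^ m) * qPochInv p m := by
  rcases lt_trichotomy m 0 with hm | rfl | hm
  · simp [qPochInv_of_neg p hm, qPochInv_of_neg p (show m - 1 < 0 by lia)]
  · simp [qPochInv_of_neg]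
  · obtain ⟨m, rfl⟩ := Int.eq_succ_of_zero_lt hm
    have hm0 := one_sub_mul_pow_ne_zero hp m
    rw [add_sub_cancel_right, ← Nat.cast_succ, zpow_natCast, pow_succ']
    change (qPochFin p p m)⁻¹ = _ * (qPochFin p p (m + 1))⁻¹
    rw [qPochFin_succ]
    field_simp

lemma qBinom_zero_left (p : K) (k : ℤ) : qBinom p 0 k = if k = 0 then 1 else 0 := by
  rcases lt_trichotomy k 0 with hk | rfl | hk
  · simp [qBinom, qPochInv_of_neg p hk, hk.ne]
  · simp [qBinom, qPochInv_zero, qPochFin]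
  · simp [qBinom, qPochInv_of_neg p (neg_lt_zero.mpr hk), hk.ne']

lemma qBinom_symm (p : K) (n : ℕ) (k : ℤ) : qBinom p n (n - k) = qBinom p n k := by
  rw [qBinom, qBinom, sub_sub_cancel, mul_right_comm]

lemma qBinom_succ (hp0 : p ≠ 0) (hp : ¬IsOfFinOrder p) (n : ℕ) (k : ℤ) :
    qBinom p (n + 1) k = qBinom p n (k - 1) + p ^ k * qBinom p n k := by
  have hn : (n : ℤ) - k = n + 1 - k - 1 := by ring
  rw [qBinom, qBinom, qBinom, qPochFin_succ, qPochInv_sub_one hp, hn, qPochInv_sub_one hp,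
    Nat.cast_succ, show (n : ℤ) - (k - 1) = n + 1 - k by ring, zpow_sub₀ hp0, zpow_add₀ hp0,
    zpow_natCast, zpow_one]
  field

lemma qBinom_succ' (hp0 : p ≠ 0) (hp : ¬IsOfFinOrder p) (n : ℕ) (k : ℤ) :
    qBinom p (n + 1) k = p ^ (n + 1 - k) * qBinom p n (k - 1) + qBinom p n k := by
  rw [← qBinom_symm, Nat.cast_succ, qBinom_succ hp0 hp, show (n : ℤ) + 1 - k - 1 = n - k by ring,
    qBinom_symm, add_comm, ← qBinom_symm p n (k - 1), show (n : ℤ) - (k - 1) = n + 1 - k by ring]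

lemma qBinom_add_two (hp0 : p ≠ 0) (hp : ¬IsOfFinOrder p) (n : ℕ) (k : ℤ) :
    qBinom p (n + 2) (k + 1) = p ^ (n + 1 - k) * qBinom p n (k - 1) +
      (1 + p ^ (n + 1)) * qBinom p n k + p ^ (k + 1) * qBinom p n (k + 1) := by
  have hpow : p ^ (n + 1 - k) * p ^ k = p ^ (n + 1) := by
    rw [← zpow_add₀ hp0, sub_add_cancel]
    norm_cast
  rw [qBinom_succ' hp0 hp, Nat.cast_succ, add_sub_add_right_eq_sub, add_sub_cancel_right,
    qBinom_succ hp0 hp n k, qBinom_succ hp0 hp n (k + 1), add_sub_cancel_right, ← hpow]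
  ring

lemma qBinom_mul_zpow_sq_add_two {Q : K} (hQ0 : Q ≠ 0) (hQ : ¬IsOfFinOrder (Q ^ 2)) (N : ℕ)
    (k : ℤ) :
    qBinom (Q ^ 2) (2 * N + 2) (N + k + 1) * Q ^ k ^ 2 =
      Q * (Q ^ 2) ^ N * (qBinom (Q ^ 2) (2 * N) (N + k - 1) * Q ^ (k - 1) ^ 2) +
      (1 + (Q ^ 2) ^ (2 * N + 1)) * (qBinom (Q ^ 2) (2 * N) (N + k) * Q ^ k ^ 2) +
      Q * (Q ^ 2) ^ N * (qBinom (Q ^ 2) (2 * N) (N + k + 1) * Q ^ (k + 1) ^ 2) := by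
  have hpow {a b : ℤ} (h : 1 + 2 * N + a = 2 * b + k ^ 2) :
      Q * (Q ^ 2) ^ N * Q ^ a = (Q ^ 2) ^ b * Q ^ k ^ 2 := by
    simp only [← zpow_natCast, ← zpow_mul, ← zpow_one_add₀ hQ0, ← zpow_add₀ hQ0]
    rw [Nat.cast_ofNat, h]
  have hdown := hpow (show 1 + 2 * N + (k - 1) ^ 2 = 2 * (2 * N + 1 - (N + k)) + k ^ 2 by ring)
  have hup := hpow (show 1 + 2 * N + (k + 1) ^ 2 = 2 * (N + k + 1) + k ^ 2 by ring)
  rw [qBinom_add_two (pow_ne_zero 2 hQ0) hQ, Nat.cast_mul, Nat.cast_ofNat]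
  linear_combination -qBinom (Q ^ 2) (2 * N) (N + k - 1) * hdown -
    qBinom (Q ^ 2) (2 * N) (N + k + 1) * hup

theorem hasSum_finite_jacobi_triple_product [TopologicalSpace K] [IsTopologicalRing K] {Q x : K}
    (hQ0 : Q ≠ 0) (hQ : ¬IsOfFinOrder (Q ^ 2)) (hx : x ≠ 0) (N : ℕ) :
    HasSum (fun k : ℤ ↦ qBinom (Q ^ 2) (2 * N) (N + k) * (Q ^ k ^ 2 * x ^ k))
      (qPochFin (-(Q * x)) (Q ^ 2) N * qPochFin (-(Q / x)) (Q ^ 2) N) := by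
  induction N with
  | zero =>
    convert! hasSum_ite_eq (0 : ℤ) (1 : K) using 1
    · funext k
      by_cases hk : k = 0 <;> simp [qBinom_zero_left, hk]
    · simp [qPochFin]
  | succ N ih =>
    have hdown := ((Equiv.subRight (1 : ℤ)).hasSum_iff.mpr ih).mul_left (Q * (Q ^ 2) ^ N * x)
    have hmid := ih.mul_left (1 + (Q ^ 2) ^ (2 * N + 1))
    have hup := ((Equiv.addRight (1 : ℤ)).hasSum_iff.mpr ih).mul_left (Q * (Q ^ 2) ^ N / x)
    convert! (hdown.add hmid).add hup using 1
    · funext k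
      simp only [Function.comp_apply, Equiv.subRight_apply, Equiv.coe_addRight]
      rw [Nat.cast_succ, add_right_comm, mul_add_one, ← mul_assoc,
        qBinom_mul_zpow_sq_add_two hQ0 hQ, ← add_sub_assoc, ← add_assoc, zpow_sub_one₀ hx,
        zpow_add_one₀ hx]
      field
    · rw [qPochFin_succ, qPochFin_succ]
      field

end QBinomial

section QPoch

lemma not_isOfFinOrder_of_norm_lt_one {𝕜 : Type*} [NormedDivisionRing 𝕜] {p : 𝕜} (hp : ‖p‖ < 1) :
    ¬IsOfFinOrder p :=
  fun h ↦ hp.ne h.norm_eq_one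

lemma norm_pow_lt_one {𝕜 : Type*} [NormedDivisionRing 𝕜] {p : 𝕜} (hp : ‖p‖ < 1) {n : ℕ}
    (hn : n ≠ 0) : ‖p ^ n‖ < 1 := by
  rw [norm_pow]
  exact pow_lt_one₀ (norm_nonneg p) hp hn

variable {p : ℂ}

lemma summable_norm_neg_mul_pow (a : ℂ) (hp : ‖p‖ < 1) :
    Summable fun i : ℕ ↦ ‖-(a * p ^ i)‖ := by
  simpa using (summable_geometric_of_lt_one (norm_nonneg p) hp).mul_left ‖a‖

lemma tendsto_qPochFin (a : ℂ) (hp : ‖p‖ < 1) :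
    Tendsto (qPochFin a p) atTop (𝓝 (qPoch a p)) := by
  have h := multipliable_one_add_of_summable (summable_norm_neg_mul_pow a hp)
  simpa only [← sub_eq_add_neg, qPochFin, qPoch] using! h.tendsto_prod_tprod_nat

lemma qPoch_ne_zero {a : ℂ} (hp : ‖p‖ < 1) (ha : ∀ i : ℕ, 1 - a * p ^ i ≠ 0) :
    qPoch a p ≠ 0 := by
  simpa only [← sub_eq_add_neg, qPoch] using tprod_one_add_ne_zero_of_summable
    (fun i ↦ by simpa only [← sub_eq_add_neg] using ha i) (summable_norm_neg_mul_pow a hp)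

lemma qPoch_self_ne_zero (hp : ‖p‖ < 1) : qPoch p p ≠ 0 :=
  qPoch_ne_zero hp (one_sub_mul_pow_ne_zero (not_isOfFinOrder_of_norm_lt_one hp))

lemma qPoch_eq_prod_qPoch_pow (a : ℂ) (hp : ‖p‖ < 1) {n : ℕ} (hn : n ≠ 0) :
    qPoch a p = ∏ j ∈ range n, qPoch (a * p ^ j) (p ^ n) := by
  have hleft : Tendsto (fun N ↦ qPochFin a p (n * N)) atTop (𝓝 (qPoch a p)) :=
    (tendsto_qPochFin a hp).comp (tendsto_id.const_mul_atTop' (Nat.pos_of_ne_zero hn))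
  have hright := tendsto_finsetProd (range n) fun j _ ↦
    tendsto_qPochFin (a * p ^ j) (norm_pow_lt_one hp hn)
  simp only [← qPochFin_mul] at hright
  exact tendsto_nhds_unique hleft hright

lemma prod_Ico_qPoch_pow_mul_qPoch_self (hp : ‖p‖ < 1) {n : ℕ} (hn : n ≠ 0) :
    (∏ j ∈ Ico 1 n, qPoch (p ^ j) (p ^ n)) * qPoch (p ^ n) (p ^ n) = qPoch p p := by
  rw [← prod_Ico_succ_top (Nat.one_le_iff_ne_zero.mpr hn), prod_Ico_eq_prod_range,
    qPoch_eq_prod_qPoch_pow p hp hn]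
  simp only [pow_add, pow_one, Nat.add_sub_cancel]

lemma tendsto_qPochInv (hp : ‖p‖ < 1) : Tendsto (qPochInv p) atTop (𝓝 (qPoch p p)⁻¹) := by
  rw [← Nat.map_cast_int_atTop, tendsto_map'_iff]
  exact (tendsto_qPochFin p hp).inv₀ (qPoch_self_ne_zero hp)

lemma tendsto_qBinom_two_mul (hp : ‖p‖ < 1) (k : ℤ) :
    Tendsto (fun N : ℕ ↦ qBinom p (2 * N) (N + k)) atTop (𝓝 (qPoch p p)⁻¹) := by
  have hcast : Tendsto (fun N : ℕ ↦ (N : ℤ)) atTop atTop := tendsto_natCast_atTop_atTop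
  have hnum : Tendsto (fun N ↦ qPochFin p p (2 * N)) atTop (𝓝 (qPoch p p)) :=
    (tendsto_qPochFin p hp).comp (tendsto_id.const_mul_atTop' two_pos)
  have hlow := (tendsto_qPochInv hp).comp (tendsto_atTop_add_const_right _ k hcast)
  have hhigh := (tendsto_qPochInv hp).comp (tendsto_atTop_add_const_right _ (-k) hcast)
  convert! (hnum.mul hlow).mul hhigh using 2 with N
  · simp only [qBinom, Function.comp_apply]
    congr 2
    push_cast
    ring
  · rw [mul_inv_cancel₀ (qPoch_self_ne_zero hp), one_mul]

lemma exists_norm_qBinom_le (hp : ‖p‖ < 1) : ∃ C, ∀ n k, ‖qBinom p n k‖ ≤ C := by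
  have hlim := tendsto_qPochFin p hp
  obtain ⟨B, hB⟩ := hlim.norm.bddAbove_range
  obtain ⟨C, hC⟩ := (hlim.inv₀ (qPoch_self_ne_zero hp)).norm.bddAbove_range
  have hfin (n : ℕ) : ‖qPochFin p p n‖ ≤ B := hB ⟨n, rfl⟩
  have hinv_nat (n : ℕ) : ‖(qPochFin p p n)⁻¹‖ ≤ C := hC ⟨n, rfl⟩
  have hinv (m : ℤ) : ‖qPochInv p m‖ ≤ C := by
    cases m with
    | ofNat m => exact hinv_nat m
    | negSucc m => simpa [qPochInv] using (norm_nonneg _).trans (hinv_nat 0)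
  have hB0 : 0 ≤ B := (norm_nonneg _).trans (hfin 0)
  have hC0 : 0 ≤ C := (norm_nonneg _).trans (hinv 0)
  refine ⟨B * C * C, fun n k ↦ ?_⟩
  rw [qBinom, norm_mul, norm_mul]
  gcongr
  exacts [hfin n, hinv k, hinv _]

end QPoch

section TripleProduct

lemma norm_cexp_pi_mul_I_mul_lt_one_iff {τ : ℂ} : ‖cexp (π * I * τ)‖ < 1 ↔ 0 < τ.im := by
  simp [Complex.norm_exp, Real.pi_pos]

lemma jacobiTheta₂_term_eq_zpow (k : ℤ) (z τ : ℂ) :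
    jacobiTheta₂_term k z τ = cexp (π * I * τ) ^ k ^ 2 * cexp (2 * π * I * z) ^ k := by
  rw [← Complex.exp_int_mul, ← Complex.exp_int_mul, ← Complex.exp_add, jacobiTheta₂_term]
  congr 1
  push_cast
  ring

lemma summable_zpow_sq_mul_zpow {Q x : ℂ} (hQ0 : Q ≠ 0) (hQ : ‖Q‖ < 1) (hx : x ≠ 0) :
    Summable fun k : ℤ ↦ Q ^ k ^ 2 * x ^ k := by
  have hτ : cexp (π * I * (log Q / (π * I))) = Q := by
    rw [mul_div_cancel₀ _ (by simp [Real.pi_ne_zero]), exp_log hQ0]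
  have hz : cexp (2 * π * I * (log x / (2 * π * I))) = x := by
    rw [mul_div_cancel₀ _ two_pi_I_ne_zero, exp_log hx]
  have h := (summable_jacobiTheta₂_term_iff (log x / (2 * π * I)) (log Q / (π * I))).mpr
    (norm_cexp_pi_mul_I_mul_lt_one_iff.mp (by rwa [hτ]))
  simpa only [jacobiTheta₂_term_eq_zpow, hτ, hz] using! h

theorem hasSum_jacobi_triple_product {Q x : ℂ} (hQ0 : Q ≠ 0) (hQ : ‖Q‖ < 1) (hx : x ≠ 0) :
    HasSum (fun k : ℤ ↦ Q ^ k ^ 2 * x ^ k)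
      (qPoch (Q ^ 2) (Q ^ 2) * (qPoch (-(Q * x)) (Q ^ 2) * qPoch (-(Q / x)) (Q ^ 2))) := by
  have hp : ‖Q ^ 2‖ < 1 := norm_pow_lt_one hQ two_ne_zero
  have hsum := summable_zpow_sq_mul_zpow hQ0 hQ hx
  obtain ⟨C, hC⟩ := exists_norm_qBinom_le hp
  have hseries : Tendsto
      (fun N : ℕ ↦ ∑' k : ℤ, qBinom (Q ^ 2) (2 * N) (N + k) * (Q ^ k ^ 2 * x ^ k)) atTop
      (𝓝 (∑' k : ℤ, (qPoch (Q ^ 2) (Q ^ 2))⁻¹ * (Q ^ k ^ 2 * x ^ k))) := by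
    refine tendsto_tsum_of_dominated_convergence (hsum.norm.mul_left C)
      (fun k ↦ (tendsto_qBinom_two_mul hp k).mul_const _) (.of_forall fun N k ↦ ?_)
    rw [norm_mul]
    gcongr
    exact hC _ _
  have hprod := (tendsto_qPochFin (-(Q * x)) hp).mul (tendsto_qPochFin (-(Q / x)) hp)
  have hlim := tendsto_nhds_unique hseries <| hprod.congr fun N ↦
    (hasSum_finite_jacobi_triple_product hQ0 (not_isOfFinOrder_of_norm_lt_one hp) hx N).tsum_eq.symm
  rw [tsum_mul_left, inv_mul_eq_iff_eq_mul₀ (qPoch_self_ne_zero hp)] at hlim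
  exact hlim ▸ hsum.hasSum

lemma jacobiTheta₂_eq_qPoch (z : ℂ) {τ : ℂ} (hτ : 0 < τ.im) :
    jacobiTheta₂ z τ = qPoch (cexp (2 * π * I * τ)) (cexp (2 * π * I * τ)) *
      (qPoch (-cexp (π * I * τ + 2 * π * I * z)) (cexp (2 * π * I * τ)) *
        qPoch (-cexp (π * I * τ - 2 * π * I * z)) (cexp (2 * π * I * τ))) := by
  have h := hasSum_jacobi_triple_product (Complex.exp_ne_zero (π * I * τ))
    (norm_cexp_pi_mul_I_mul_lt_one_iff.mpr hτ) (Complex.exp_ne_zero (2 * π * I * z))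
  have hsq : cexp (π * I * τ) ^ 2 = cexp (2 * π * I * τ) := by
    rw [← Complex.exp_nat_mul]
    ring_nf
  rw [← hsq, Complex.exp_add, Complex.exp_sub, ← h.tsum_eq]
  exact tsum_congr fun k ↦ jacobiTheta₂_term_eq_zpow k z τ

end TripleProduct

section Theta

lemma theta1_pi_sub (z τ : ℂ) : theta1 (π - z) τ = theta1 z τ := by
  have hsin (n : ℕ) : sin ((2 * n + 1) * (π - z)) = sin ((2 * n + 1) * z) := by
    rw [show (2 * n + 1) * (π - z) = π - (2 * n + 1) * z + n * (2 * π) by ring,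
      Complex.sin_add_nat_mul_two_pi, Complex.sin_pi_sub]
  simp only [theta1, hsin]

lemma cexp_mul_jacobiTheta₂_term (n : ℤ) (z τ : ℂ) :
    cexp (π * I * τ / 4 + I * z) * jacobiTheta₂_term n (z / π - 1 / 2 + τ / 2) τ =
      (-1) ^ n * cexp (π * I * τ * (2 * n + 1) ^ 2 / 4) * cexp ((2 * n + 1) * z * I) := by
  have hexp : cexp (-(π * I)) = -1 := by rw [Complex.exp_neg, Complex.exp_pi_mul_I, inv_neg_one]
  rw [jacobiTheta₂_term, ← hexp, ← Complex.exp_int_mul, ← Complex.exp_add, ← Complex.exp_add,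
    ← Complex.exp_add]
  congr 1
  field

lemma theta1_eq_jacobiTheta₂ (z : ℂ) {τ : ℂ} (hτ : 0 < τ.im) :
    theta1 z τ =
      -I * (cexp (π * I * τ / 4 + I * z) * jacobiTheta₂ (z / π - 1 / 2 + τ / 2) τ) := by
  have h := (((hasSum_jacobiTheta₂_term (z / π - 1 / 2 + τ / 2) hτ).mul_left
    (cexp (π * I * τ / 4 + I * z))).mul_left (-I)).nat_add_neg_add_one
  rw [theta1, ← tsum_mul_left, ← h.tsum_eq]
  refine tsum_congr fun n ↦ ?_
  have hneg : (2 * (-(n + 1 : ℤ) : ℤ) + 1 : ℂ) = -(2 * n + 1) := by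
    push_cast
    ring
  have hsign : (-1 : ℂ) ^ (-(n + 1 : ℤ)) = -(-1) ^ n := by
    rw [zpow_neg, ← inv_zpow, inv_neg_one, zpow_add_one₀ (by simp), zpow_natCast, mul_neg_one]
  rw [cexp_mul_jacobiTheta₂_term, cexp_mul_jacobiTheta₂_term, hneg, hsign, neg_sq, zpow_natCast,
    Int.cast_natCast, Complex.sin, neg_mul (2 * n + 1 : ℂ) z]
  ring

lemma theta1_pi_mul_neg_inv_eq_jacobiTheta₂ (t : ℂ) {σ : ℂ} (hσ : 0 < σ.im) :
    theta1 (π * t) (-1 / σ) = (-I * σ) ^ (1 / 2 : ℂ) * (cexp (π * I * σ * (t - 1 / 2) ^ 2) *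
      jacobiTheta₂ (σ * (t - 1 / 2) - 1 / 2) σ) := by
  have hσ0 : σ ≠ 0 := by rintro rfl; simp at hσ
  have him : 0 < (-1 / σ).im := by
    simpa [neg_div, inv_neg] using UpperHalfPlane.im_inv_neg_coe_pos ⟨σ, hσ⟩
  have harg : π * t / π - 1 / 2 + -1 / σ / 2 = (σ * (t - 1 / 2) - 1 / 2) / σ := by field
  have hI : -I = cexp (-(π / 2 * I)) := by
    rw [Complex.exp_neg, Complex.exp_pi_div_two_mul_I, Complex.inv_I]
  have hexp : -I * cexp (π * I * (-1 / σ) / 4 + I * (π * t)) =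
      cexp (π * I * σ * (t - 1 / 2) ^ 2) *
        cexp (-π * I * (σ * (t - 1 / 2) - 1 / 2) ^ 2 / σ) := by
    rw [hI, ← Complex.exp_add, ← Complex.exp_add]
    congr 1
    field
  rw [theta1_eq_jacobiTheta₂ _ him, harg, ← mul_assoc, hexp,
    jacobiTheta₂_functional_equation _ σ]
  field

lemma theta1_pi_mul_neg_inv_eq_qPoch (t : ℂ) {σ : ℂ} (hσ : 0 < σ.im) :
    theta1 (π * t) (-1 / σ) =
      (-I * σ) ^ (1 / 2 : ℂ) * qPoch (cexp (2 * π * I * σ)) (cexp (2 * π * I * σ)) *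
        (cexp (π * I * σ * (t - 1 / 2) ^ 2) *
          (qPoch (cexp (2 * π * I * σ * t)) (cexp (2 * π * I * σ)) *
            qPoch (cexp (2 * π * I * σ * (1 - t))) (cexp (2 * π * I * σ)))) := by
  have hy : -cexp (π * I * σ + 2 * π * I * (σ * (t - 1 / 2) - 1 / 2)) =
      cexp (2 * π * I * σ * t) := by
    rw [← Complex.exp_antiperiodic]
    ring_nf
  have hy' : -cexp (π * I * σ - 2 * π * I * (σ * (t - 1 / 2) - 1 / 2)) =
      cexp (2 * π * I * σ * (1 - t)) := by
    rw [← Complex.exp_antiperiodic.sub_eq]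
    ring_nf
  rw [theta1_pi_mul_neg_inv_eq_jacobiTheta₂ t hσ, jacobiTheta₂_eq_qPoch _ hσ, hy, hy']
  ring

lemma theta1_div_theta1_pi_div_two (t : ℂ) {σ : ℂ} (hσ : 0 < σ.im) :
    theta1 (π * t) (-1 / σ) / theta1 (π / 2) (-1 / σ) =
      cexp (π * I * σ * (t - 1 / 2) ^ 2) *
        (qPoch (cexp (2 * π * I * σ * t)) (cexp (2 * π * I * σ)) *
          qPoch (cexp (2 * π * I * σ * (1 - t))) (cexp (2 * π * I * σ))) /
        qPoch (cexp (π * I * σ)) (cexp (2 * π * I * σ)) ^ 2 := by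
  have hσ0 : σ ≠ 0 := by rintro rfl; simp at hσ
  have hp : ‖cexp (2 * π * I * σ)‖ < 1 := UpperHalfPlane.norm_exp_two_pi_I_lt_one ⟨σ, hσ⟩
  have hconst : (-I * σ) ^ (1 / 2 : ℂ) *
      qPoch (cexp (2 * π * I * σ)) (cexp (2 * π * I * σ)) ≠ 0 :=
    mul_ne_zero (by simp [Complex.cpow_eq_zero_iff, hσ0]) (qPoch_self_ne_zero hp)
  have hhalf : theta1 (π / 2) (-1 / σ) =
      (-I * σ) ^ (1 / 2 : ℂ) * qPoch (cexp (2 * π * I * σ)) (cexp (2 * π * I * σ)) *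
        qPoch (cexp (π * I * σ)) (cexp (2 * π * I * σ)) ^ 2 := by
    have hexp : cexp (2 * π * I * σ * (1 / 2)) = cexp (π * I * σ) := by ring_nf
    rw [div_eq_mul_one_div, theta1_pi_mul_neg_inv_eq_qPoch _ hσ, sub_half, hexp, sub_self,
      zero_pow two_ne_zero, mul_zero, Complex.exp_zero, one_mul, sq]
  rw [hhalf, theta1_pi_mul_neg_inv_eq_qPoch t hσ, mul_div_mul_left _ _ hconst]

lemma theta1_natCast_mul_pi_div_div_theta1_pi_div_two {n j : ℕ} (hn : n ≠ 0) (hj : j ≤ n) {τ q : ℂ}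
    (hτ : 0 < τ.im) (hq : q = cexp (π * I * τ)) :
    theta1 (j * π / n) (-1 / τ / n) / theta1 (π / 2) (-1 / τ / n) =
      cexp (π * I * τ / n * (j - n / 2) ^ 2) *
        (qPoch ((q ^ 2) ^ j) ((q ^ 2) ^ n) * qPoch ((q ^ 2) ^ (n - j)) ((q ^ 2) ^ n)) /
        qPoch (q ^ n) ((q ^ 2) ^ n) ^ 2 := by
  have hσ : 0 < (n * τ).im := by
    simpa using mul_pos (Nat.cast_pos.mpr (Nat.pos_of_ne_zero hn)) hτ
  have hpow (k : ℕ) : q ^ k = cexp (k * (π * I * τ)) := by rw [hq, Complex.exp_nat_mul]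
  have hbase : (q ^ 2) ^ n = cexp (2 * π * I * (n * τ)) := by
    rw [← pow_mul, hpow]
    push_cast
    ring_nf
  have hj' : (q ^ 2) ^ j = cexp (2 * π * I * (n * τ) * (j / n)) := by
    rw [← pow_mul, hpow]
    congr 1
    push_cast
    field
  have hnj : (q ^ 2) ^ (n - j) = cexp (2 * π * I * (n * τ) * (1 - j / n)) := by
    rw [← pow_mul, hpow]
    congr 1
    push_cast [hj]
    field
  have hhalf : q ^ n = cexp (π * I * (n * τ)) := by
    rw [hpow]
    ring_nf
  have hgauss : π * I * τ / n * (j - n / 2) ^ 2 = π * I * (n * τ) * (j / n - 1 / 2) ^ 2 := by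
    field
  rw [hbase, hj', hnj, hhalf, hgauss, ← theta1_div_theta1_pi_div_two _ hσ, mul_div_assoc',
    mul_comm (π : ℂ), div_div, mul_comm τ]

lemma sum_Ico_one_sub_sq {K : Type*} [Field K] [CharZero K] {n : ℕ} (hn : 1 ≤ n) (c : K) :
    ∑ j ∈ Ico 1 n, (j - c) ^ 2 = (n - 1) * (n * (2 * n - 1) / 6 - n * c + c ^ 2) := by
  induction n, hn using Nat.le_induction with
  | base => simp
  | succ n hn ih =>
    rw [sum_Ico_succ_top hn, ih]
    push_cast
    ring

lemma prod_Ico_one_eq_sq_mul_prod_Icc {M : Type*} [CommMonoid M] {f : ℕ → M} {n : ℕ} (hn : 3 ≤ n)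
    (hf : f (n - 1) = f 1) :
    ∏ j ∈ Ico 1 n, f j = f 1 ^ 2 * ∏ j ∈ Icc 2 (n - 2), f j := by
  obtain ⟨m, rfl⟩ := Nat.exists_eq_add_of_le' hn
  change f (m + 2) = f 1 at hf
  change _ = f 1 ^ 2 * ∏ j ∈ Icc 2 (m + 1), f j
  rw [prod_Ico_succ_top (by lia), prod_eq_prod_Ico_succ_bot (by lia), hf,
    ← Ico_add_one_right_eq_Icc, sq, mul_right_comm, one_add_one_eq_two]
  rfl

lemma prod_Ico_one_reflect {M : Type*} [CommMonoid M] (f : ℕ → M) (n : ℕ) :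
    ∏ j ∈ Ico 1 n, f (n - j) = ∏ j ∈ Ico 1 n, f j := by
  rw [prod_Ico_reflect f 1 n.le_succ, Nat.add_sub_cancel_left, Nat.add_sub_cancel]

lemma prod_theta1_div_theta1_pi_div_two_pow {n : ℕ} (hn : n ≠ 0) {τ q : ℂ}
    (hτ : 0 < τ.im) (hq : q = cexp (π * I * τ)) :
    (∏ j ∈ Ico 1 n, theta1 (j * π / n) (-1 / τ / n)) / theta1 (π / 2) (-1 / τ / n) ^ (n - 1) =
      cexp (π * I * τ * (n - 2) * (n - 1) / 12) * qPoch (q ^ 2) (q ^ 2) ^ 2 /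
        (qPoch ((q ^ 2) ^ n) ((q ^ 2) ^ n) ^ 2 * qPoch (q ^ n) ((q ^ 2) ^ n) ^ (2 * (n - 1))) := by
  have hq1 : ‖q ^ 2‖ < 1 :=
    norm_pow_lt_one (hq ▸ norm_cexp_pi_mul_I_mul_lt_one_iff.mpr hτ) two_ne_zero
  have hexp : ∏ j ∈ Ico 1 n, cexp (π * I * τ / n * (j - n / 2) ^ 2) =
      cexp (π * I * τ * (n - 2) * (n - 1) / 12) := by
    rw [← Complex.exp_sum, ← mul_sum, sum_Ico_one_sub_sq (Nat.one_le_iff_ne_zero.mpr hn)]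
    congr 1
    field
  have hqPoch : ∏ j ∈ Ico 1 n, qPoch ((q ^ 2) ^ j) ((q ^ 2) ^ n) =
      qPoch (q ^ 2) (q ^ 2) / qPoch ((q ^ 2) ^ n) ((q ^ 2) ^ n) :=
    eq_div_of_mul_eq (qPoch_self_ne_zero (norm_pow_lt_one hq1 hn))
      (prod_Ico_qPoch_pow_mul_qPoch_self hq1 hn)
  calc
    _ = ∏ j ∈ Ico 1 n, theta1 (j * π / n) (-1 / τ / n) / theta1 (π / 2) (-1 / τ / n) := by
      rw [prod_div_distrib, prod_const, Nat.card_Ico]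
    _ = ∏ j ∈ Ico 1 n, cexp (π * I * τ / n * (j - n / 2) ^ 2) *
        (qPoch ((q ^ 2) ^ j) ((q ^ 2) ^ n) * qPoch ((q ^ 2) ^ (n - j)) ((q ^ 2) ^ n)) /
        qPoch (q ^ n) ((q ^ 2) ^ n) ^ 2 :=
      prod_congr rfl fun j hj ↦
        theta1_natCast_mul_pi_div_div_theta1_pi_div_two hn (mem_Ico.mp hj).2.le hτ hq
    _ = cexp (π * I * τ * (n - 2) * (n - 1) / 12) *
        (qPoch (q ^ 2) (q ^ 2) / qPoch ((q ^ 2) ^ n) ((q ^ 2) ^ n)) ^ 2 /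
        qPoch (q ^ n) ((q ^ 2) ^ n) ^ (2 * (n - 1)) := by
      rw [prod_div_distrib, prod_mul_distrib, prod_mul_distrib, hexp,
        prod_Ico_one_reflect (fun j ↦ qPoch ((q ^ 2) ^ j) ((q ^ 2) ^ n)), hqPoch, ← sq, prod_const,
        Nat.card_Ico, pow_mul]
    _ = _ := by rw [div_pow, mul_div_assoc', div_div]

end Theta

theorem theta1_quotient_product (n : ℕ) (hn : 3 ≤ n) (τ : ℂ) (hτ : 0 < τ.im)
    (q : ℂ) (hq : q = Complex.exp (Real.pi * Complex.I * τ))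
    (τ' : ℂ) (hτ' : τ' = -1 / τ) :
    (theta1 ((Real.pi : ℂ) / n) (τ' / n)) ^ 2 *
        (∏ j ∈ Finset.Icc 2 (n - 2), theta1 ((j : ℂ) * Real.pi / n) (τ' / n)) /
        (theta1 ((Real.pi : ℂ) / 2) (τ' / n)) ^ (n - 1) =
      Complex.exp (Real.pi * Complex.I * τ * ((n : ℂ) - 2) * ((n : ℂ) - 1) / 12) *
        (qPoch (q ^ 2) (q ^ 2)) ^ 2 /
        ((qPoch (q ^ (2 * n)) (q ^ (2 * n))) ^ 2 *
          (qPoch (q ^ n) (q ^ (2 * n))) ^ (2 * n - 2)) := by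
  have hsymm : theta1 ((n - 1 : ℕ) * π / n) (τ' / n) = theta1 ((1 : ℕ) * π / n) (τ' / n) := by
    rw [← theta1_pi_sub, Nat.cast_pred (by lia)]
    congr 1
    field [show (n : ℂ) ≠ 0 by norm_cast; lia]
  have hfold := prod_Ico_one_eq_sq_mul_prod_Icc (f := fun j ↦ theta1 (j * π / n) (τ' / n)) hn hsymm
  simp only [Nat.cast_one, one_mul] at hfold
  subst hτ'
  rw [← hfold, prod_theta1_div_theta1_pi_div_two_pow (by lia) hτ hq, pow_mul q 2 n,
    show 2 * n - 2 = 2 * (n - 1) by lia]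
end

section
/- With q = e^{-2π} and a = π^{1/4}/Γ(3/4), one has Γ_q(1/4) · Γ_q(3/4) = (1 - e^{-2π}) · a² · 2^{-17/16} · e^{3π/16} · (√2 + 1)^{1/4}, where Γ denotes the classical gamma function. -/
/-- Infinite q-Pochhammer symbol `(a; q)_∞ = ∏_{i=0}^∞ (1 - a qⁱ)` (real version). -/
noncomputable def qPochR (a q : ℝ) : ℝ := ∏' i : ℕ, (1 - a * q ^ i)

/-- The q-gamma function `Γ_q(z) = ((q;q)_∞ / (q^z;q)_∞) (1-q)^{1-z}` for `0 < q < 1`. -/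
noncomputable def qGamma (q z : ℝ) : ℝ :=
  qPochR q q / qPochR (q ^ z) q * (1 - q) ^ (1 - z)

/-!
Put `θ(x) = ∑ x^(k²)` and `p = e^(-π/2)`, so that `q = p⁴`. As `(p; p⁴)_∞ (p³; p⁴)_∞ = (p; p²)_∞`,
the product of the two `q`-gamma values is `(1 - q) (q; q)_∞² / (p; p²)_∞`, and the Jacobi triple
product turns both symbols into values of `θ`: the discriminant formula
`θ(x)⁴ θ(-x)⁴ (θ(x)⁴ - θ(-x)⁴) = 16 x (x²; x²)_∞¹²` at `x = p²` gives `(q; q)_∞`, and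
`θ(-p) = (p²; p²)_∞ (p; p²)_∞²` leads to `(p; p²)_∞`.

Replacing `x` by `x²` performs one arithmetic-geometric mean step on `(θ(x)², θ(-x)²)`; as this pair
tends to `(1, 1)`, its mean is `1` for every `x`. The functional equation of `θ` gives
`θ(e^(-π))² = √2 θ(-e^(-π))²`, so both values follow from `agm(1, √2)`, which Gauss's elliptic
integral expresses through `Γ(3/4)`.
-/

open Filter Topology Set MeasureTheory Real

section QPochhammer

variable {q : ℝ}

theorem abs_sq_lt_one (hq : |q| < 1) : |q ^ 2| < 1 := by
  rw [abs_pow]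
  exact pow_lt_one₀ (abs_nonneg q) hq two_ne_zero

theorem summable_neg_mul_pow (a : ℝ) (hq : |q| < 1) : Summable fun i : ℕ ↦ -(a * q ^ i) :=
  ((summable_geometric_of_abs_lt_one hq).mul_left a).neg

theorem multipliable_one_sub_mul_pow (a : ℝ) (hq : |q| < 1) :
    Multipliable fun i : ℕ ↦ 1 - a * q ^ i := by
  simpa only [sub_eq_add_neg] using
    Real.multipliable_one_add_of_summable (summable_neg_mul_pow a hq)

theorem qPochR_pos {a : ℝ} (ha : a < 1) (hq₀ : 0 ≤ q) (hq₁ : q < 1) : 0 < qPochR a q := by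
  have hfactor (i : ℕ) : 0 < 1 - a * q ^ i := by
    have h₀ : 0 ≤ q ^ i := pow_nonneg hq₀ i
    have h₁ : q ^ i ≤ 1 := pow_le_one₀ hq₀ hq₁.le
    rcases le_total a 0 with h | h <;> nlinarith
  have hlog := Real.summable_log_one_add_of_summable
    (summable_neg_mul_pow a (abs_lt.mpr ⟨by linarith, hq₁⟩))
  simp only [← sub_eq_add_neg] at hlog
  rw [qPochR, ← Real.rexp_tsum_eq_tprod hfactor hlog]
  exact Real.exp_pos _

theorem qPochR_le_one {a : ℝ} (ha₀ : 0 ≤ a) (ha₁ : a ≤ 1) (hq₀ : 0 ≤ q) (hq₁ : q < 1) :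
    qPochR a q ≤ 1 := by
  refine (multipliable_one_sub_mul_pow a (abs_lt.mpr ⟨by linarith, hq₁⟩)).tprod_le_of_prod_range_le
    fun n ↦ Finset.prod_le_one (fun i _ ↦ ?_) fun i _ ↦ ?_
  · exact sub_nonneg.mpr (mul_le_one₀ ha₁ (pow_nonneg hq₀ i) (pow_le_one₀ hq₀ hq₁.le))
  · exact sub_le_self 1 (mul_nonneg ha₀ (pow_nonneg hq₀ i))

theorem qPochR_eq_mul_sq (a : ℝ) (hq : |q| < 1) :
    qPochR a q = qPochR a (q ^ 2) * qPochR (a * q) (q ^ 2) := by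
  have heven := multipliable_one_sub_mul_pow a (abs_sq_lt_one hq)
  have hodd := multipliable_one_sub_mul_pow (a * q) (abs_sq_lt_one hq)
  simp only [qPochR]
  rw [← tprod_even_mul_odd (f := fun i : ℕ ↦ 1 - a * q ^ i)
    (by simpa only [pow_mul] using heven)
    (by simpa only [pow_succ', pow_mul, mul_assoc, mul_left_comm] using hodd)]
  simp only [pow_succ', pow_mul, mul_assoc]

theorem qPochR_eq_one_sub_mul (a : ℝ) (hq : |q| < 1) :
    qPochR a q = (1 - a) * qPochR (a * q) q := by
  have h := multipliable_one_sub_mul_pow (a * q) hq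
  simp only [qPochR]
  rw [tprod_eq_zero_mul' (by simpa only [pow_succ', mul_assoc] using h)]
  simp only [pow_zero, mul_one, pow_succ', mul_assoc]

theorem qPochR_neg_mul_qPochR (a : ℝ) (hq : |q| < 1) :
    qPochR (-a) q * qPochR a q = qPochR (a ^ 2) (q ^ 2) := by
  rw [qPochR, qPochR, ← (multipliable_one_sub_mul_pow (-a) hq).tprod_mul
    (multipliable_one_sub_mul_pow a hq), qPochR]
  congr! 2 with i
  ring

theorem tendsto_qPochR_zero (hq : |q| < 1) : Tendsto (qPochR · q) (𝓝 0) (𝓝 1) := by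
  have hsum : Summable fun i : ℕ ↦ |q| ^ i :=
    summable_geometric_of_lt_one (abs_nonneg q) hq
  have hfactor (i : ℕ) : Tendsto (fun a : ℝ ↦ -(a * q ^ i)) (𝓝 0) (𝓝 0) := by
    simpa using (Tendsto.mul_const (q ^ i) (tendsto_id (x := 𝓝 (0 : ℝ)))).neg
  have hbound : ∀ᶠ a : ℝ in 𝓝 0, ∀ i : ℕ, ‖-(a * q ^ i)‖ ≤ |q| ^ i := by
    filter_upwards [Metric.ball_mem_nhds (0 : ℝ) one_pos] with a ha i
    rw [norm_neg, norm_mul, norm_pow, Real.norm_eq_abs q]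
    exact mul_le_of_le_one_left (by positivity) (by simpa using (mem_ball_zero_iff.mp ha).le)
  simpa only [qPochR, ← sub_eq_add_neg, add_zero, tprod_one] using
    tendsto_tprod_one_add_of_dominated_convergence hsum hfactor hbound

theorem qPochR_zpow (hq₀ : q ≠ 0) (hq₁ : |q| < 1) (m : ℤ) :
    qPochR (q ^ m) q = (1 - q ^ m) * qPochR (q ^ (m + 1)) q := by
  rw [zpow_add_one₀ hq₀, ← qPochR_eq_one_sub_mul _ hq₁]

theorem qPochR_zpow_eq_zero (hq : q ≠ 0) {m : ℤ} (hm : m ≤ 0) : qPochR (q ^ m) q = 0 := by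
  obtain ⟨n, rfl⟩ := Int.exists_eq_neg_ofNat hm
  refine tprod_of_exists_eq_zero ⟨n, ?_⟩
  rw [zpow_neg, zpow_natCast, inv_mul_cancel₀ (pow_ne_zero n hq), sub_self]

theorem qPochR_zpow_mem_Icc (hq₀ : 0 < q) (hq₁ : q < 1) (m : ℤ) :
    qPochR (q ^ m) q ∈ Icc 0 1 := by
  rcases le_or_gt m 0 with hm | hm
  · simp [qPochR_zpow_eq_zero hq₀.ne' hm]
  · have hlt : q ^ m < 1 := zpow_lt_one₀ hq₀ hq₁ hm
    exact ⟨(qPochR_pos hlt hq₀.le hq₁).le,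
      qPochR_le_one (zpow_pos hq₀ m).le hlt.le hq₀.le hq₁⟩

theorem tendsto_qPochR_zpow_natCast_add (hq₀ : 0 < q) (hq₁ : q < 1) (m : ℤ) :
    Tendsto (fun n : ℕ ↦ qPochR (q ^ (n + m)) q) atTop (𝓝 1) := by
  refine (tendsto_qPochR_zero (abs_lt.mpr ⟨by linarith, hq₁⟩)).comp ?_
  simp_rw [zpow_add₀ hq₀.ne', zpow_natCast]
  simpa using (tendsto_pow_atTop_nhds_zero_of_lt_one hq₀.le hq₁).mul_const (q ^ m)

end QPochhammer

section TripleProduct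

/-- Up to the factor `(x²; x²)_∞ (x^(4n+2); x²)_∞`, the coefficient of `z ^ k` in the finite product
`∏_{i < n} (1 + z x^(2i+1)) (1 + z⁻¹ x^(2i+1))`. Infinite `q`-Pochhammer symbols replace the
customary `q`-binomial coefficient so that the coefficients with `n < |k|` vanish of themselves. -/
noncomputable def tripleProductCoeff (x : ℝ) (n : ℕ) (k : ℤ) : ℝ :=
  x ^ (k ^ 2) *
    (qPochR ((x ^ 2) ^ (n + (1 + k))) (x ^ 2) * qPochR ((x ^ 2) ^ (n + (1 - k))) (x ^ 2))

variable {x : ℝ}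

theorem tripleProductCoeff_succ (hx₀ : x ≠ 0) (hx₁ : |x| < 1) (n : ℕ) (k : ℤ) :
    (1 - (x ^ 2) ^ (2 * n + 1)) * (1 - (x ^ 2) ^ (2 * n + 2)) * tripleProductCoeff x (n + 1) k =
      (1 + (x ^ 2) ^ (2 * n + 1)) * tripleProductCoeff x n k +
        x ^ (2 * n + 1) * (tripleProductCoeff x n (k - 1) + tripleProductCoeff x n (k + 1)) := by
  have hy₀ : x ^ 2 ≠ 0 := pow_ne_zero 2 hx₀
  have hfirst (m : ℤ) := qPochR_zpow hy₀ (abs_sq_lt_one hx₁) m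
  simp only [tripleProductCoeff, Nat.cast_add, Nat.cast_one]
  rw [show (n + (1 + (k - 1)) : ℤ) = n + k by ring,
    show (n + (1 - (k - 1)) : ℤ) = n - k + 1 + 1 by ring,
    show (n + (1 + (k + 1)) : ℤ) = n + k + 1 + 1 by ring,
    show (n + (1 - (k + 1)) : ℤ) = n - k by ring,
    show (n + 1 + (1 + k) : ℤ) = n + k + 1 + 1 by ring,
    show (n + 1 + (1 - k) : ℤ) = n - k + 1 + 1 by ring,
    show (n + (1 + k) : ℤ) = n + k + 1 by ring, show (n + (1 - k) : ℤ) = n - k + 1 by ring,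
    hfirst (n + k), hfirst (n - k), hfirst (n + k + 1), hfirst (n - k + 1),
    show (k - 1) ^ 2 = k ^ 2 - (2 * k - 1) by ring, show (k + 1) ^ 2 = k ^ 2 + (2 * k + 1) by ring]
  generalize qPochR ((x ^ 2) ^ (n + k + 1 + 1 : ℤ)) (x ^ 2) = U
  generalize qPochR ((x ^ 2) ^ (n - k + 1 + 1 : ℤ)) (x ^ 2) = V
  have hA : x ^ k ≠ 0 := zpow_ne_zero k hx₀
  simp only [(Commute.refl x).mul_zpow, sq x, zpow_add₀ hx₀, zpow_sub₀ hx₀, zpow_mul x 2 k,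
    zpow_ofNat, zpow_natCast, pow_add, pow_mul, pow_one]
  generalize x ^ k = A at *
  generalize x ^ (k ^ 2) = B
  field_simp
  ring

theorem hasSum_tripleProductCoeff (hx₀ : x ≠ 0) (hx₁ : |x| < 1) {z : ℝ} (hz : z ≠ 0) (n : ℕ) :
    HasSum (fun k : ℤ ↦ tripleProductCoeff x n k * z ^ k)
      (qPochR (x ^ 2) (x ^ 2) * qPochR ((x ^ 2) ^ (2 * n + 1)) (x ^ 2) *
        ((∏ i ∈ Finset.range n, (1 - -z * x * (x ^ 2) ^ i)) *
          ∏ i ∈ Finset.range n, (1 - -z⁻¹ * x * (x ^ 2) ^ i))) := by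
  have hy₀ : x ^ 2 ≠ 0 := pow_ne_zero 2 hx₀
  have hy₁ := abs_sq_lt_one hx₁
  induction n with
  | zero =>
    have hne_zero : ∀ k : ℤ, k ≠ 0 → tripleProductCoeff x 0 k * z ^ k = 0 := fun k hk ↦ by
      rcases lt_or_gt_of_ne hk with h | h
      · simp [tripleProductCoeff, qPochR_zpow_eq_zero hy₀ (show 1 + k ≤ 0 by lia)]
      · simp [tripleProductCoeff, qPochR_zpow_eq_zero hy₀ (show 1 - k ≤ 0 by lia)]
    simpa [tripleProductCoeff] using hasSum_single (0 : ℤ) hne_zero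
  | succ n ih =>
    have hdown := (((Equiv.subRight (1 : ℤ)).hasSum_iff).mpr ih).mul_left (x ^ (2 * n + 1) * z)
    have hup := (((Equiv.addRight (1 : ℤ)).hasSum_iff).mpr ih).mul_left (x ^ (2 * n + 1) * z⁻¹)
    have hone_sub_ne_zero (m : ℕ) : 1 - (x ^ 2) ^ (m + 1) ≠ 0 :=
      (sub_pos.mpr ((le_abs_self _).trans_lt
        (by rw [abs_pow]; exact pow_lt_one₀ (abs_nonneg _) hy₁ m.succ_ne_zero))).ne'
    rw [← hasSum_mul_left_iff (mul_ne_zero (hone_sub_ne_zero (2 * n))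
      (hone_sub_ne_zero (2 * n + 1)))]
    convert! (ih.mul_left (1 + (x ^ 2) ^ (2 * n + 1))).add (hdown.add hup) using 1
    · ext k
      rw [← mul_assoc, tripleProductCoeff_succ hx₀ hx₁]
      simp only [Function.comp_apply, Equiv.subRight_apply,
        Equiv.coe_addRight, zpow_sub_one₀ hz, zpow_add_one₀ hz]
      field_simp
    · rw [Finset.prod_range_succ, Finset.prod_range_succ,
        qPochR_eq_one_sub_mul ((x ^ 2) ^ (2 * n + 1)) hy₁, ← pow_succ,
        qPochR_eq_one_sub_mul ((x ^ 2) ^ (2 * n + 1 + 1)) hy₁, ← pow_succ,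
        show 2 * (n + 1) + 1 = 2 * n + 1 + 1 + 1 by ring]
      field_simp
      ring

theorem summable_zpow_sq_mul_zpow_s18 (hx₀ : 0 < x) (hx₁ : x < 1) {z : ℝ} (hz : 0 < z) :
    Summable fun k : ℤ ↦ x ^ (k ^ 2) * z ^ k := by
  have hτ : 0 < (Complex.I * (-Real.log x / π : ℝ)).im := by
    simpa using div_pos (neg_pos.mpr (Real.log_neg hx₀ hx₁)) Real.pi_pos
  refine ((summable_jacobiTheta₂_term_iff (Complex.I * (-Real.log z / (2 * π) : ℝ)) _).mpr
    hτ).norm.congr fun k ↦ ?_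
  rw [norm_jacobiTheta₂_term, ← Real.rpow_intCast, ← Real.rpow_intCast,
    Real.rpow_def_of_pos hx₀, Real.rpow_def_of_pos hz, ← Real.exp_add]
  congr 1
  have := Real.pi_ne_zero
  simp only [Complex.mul_im, Complex.I_re, Complex.I_im, Complex.ofReal_re, Complex.ofReal_im]
  push_cast
  field_simp
  ring

theorem tendsto_tsum_tripleProductCoeff (hx₀ : x ≠ 0) (hx₁ : |x| < 1) {z : ℝ} (hz : z ≠ 0) :
    Tendsto (fun n ↦ ∑' k : ℤ, tripleProductCoeff x n k * z ^ k) atTop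
      (𝓝 (∑' k : ℤ, x ^ (k ^ 2) * z ^ k)) := by
  have hy₀ : 0 < x ^ 2 := by positivity
  have hy₁ : x ^ 2 < 1 := (sq_lt_one_iff_abs_lt_one x).mpr hx₁
  refine tendsto_tsum_of_dominated_convergence
    (summable_zpow_sq_mul_zpow_s18 (abs_pos.mpr hx₀) hx₁ (abs_pos.mpr hz)) (fun k ↦ ?_)
    (.of_forall fun n k ↦ ?_)
  · have hplus := tendsto_qPochR_zpow_natCast_add hy₀ hy₁ (1 + k)
    have hminus := tendsto_qPochR_zpow_natCast_add hy₀ hy₁ (1 - k)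
    simpa only [tripleProductCoeff, mul_one] using
      ((hplus.mul hminus).const_mul (x ^ (k ^ 2))).mul_const (z ^ k)
  · obtain ⟨h₀, h₁⟩ := qPochR_zpow_mem_Icc hy₀ hy₁ (n + (1 + k))
    obtain ⟨h₀', h₁'⟩ := qPochR_zpow_mem_Icc hy₀ hy₁ (n + (1 - k))
    rw [tripleProductCoeff, norm_mul, norm_mul, Real.norm_of_nonneg (mul_nonneg h₀ h₀'),
      norm_zpow, norm_zpow, Real.norm_eq_abs, Real.norm_eq_abs]
    gcongr
    exact mul_le_of_le_one_right (by positivity) (mul_le_one₀ h₁ h₀' h₁')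

/-- The **Jacobi triple product**. -/
theorem tsum_zpow_sq_mul_zpow (hx : |x| < 1) {z : ℝ} (hz : z ≠ 0) :
    ∑' k : ℤ, x ^ (k ^ 2) * z ^ k =
      qPochR (x ^ 2) (x ^ 2) * (qPochR (-z * x) (x ^ 2) * qPochR (-z⁻¹ * x) (x ^ 2)) := by
  rcases eq_or_ne x 0 with rfl | hx₀
  · rw [tsum_eq_single 0 fun k hk ↦ by simp [zero_zpow _ (pow_ne_zero 2 hk)]]
    simp [qPochR]
  have hy₀ : 0 < x ^ 2 := by positivity
  have hy₁ : x ^ 2 < 1 := (sq_lt_one_iff_abs_lt_one x).mpr hx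
  have hprod (a : ℝ) : Tendsto (fun n ↦ ∏ i ∈ Finset.range n, (1 - a * (x ^ 2) ^ i)) atTop
      (𝓝 (qPochR a (x ^ 2))) :=
    (multipliable_one_sub_mul_pow a (abs_sq_lt_one hx)).tendsto_prod_tprod_nat
  have htail : Tendsto (fun n ↦ qPochR ((x ^ 2) ^ (2 * n + 1)) (x ^ 2)) atTop (𝓝 1) := by
    refine (tendsto_qPochR_zero (abs_sq_lt_one hx)).comp
      ((tendsto_pow_atTop_nhds_zero_of_lt_one hy₀.le hy₁).comp ?_)
    exact tendsto_atTop_mono (fun n ↦ show n ≤ 2 * n + 1 by lia) tendsto_id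
  simpa only [mul_one] using tendsto_nhds_unique (tendsto_tsum_tripleProductCoeff hx₀ hx hz)
    (((htail.const_mul _).mul ((hprod (-z * x)).mul (hprod (-z⁻¹ * x)))).congr
      fun n ↦ (hasSum_tripleProductCoeff hx₀ hx hz n).tsum_eq.symm)

end TripleProduct

section Theta

/-- Jacobi's theta constant `∑ x^(k²)`, summed over all integers `k`, as a function of the real
nome `x`. At `x` and `-x` it is the classical `θ₃` and `θ₄`. -/
noncomputable def thetaNome (x : ℝ) : ℝ := ∑' k : ℤ, x ^ (k ^ 2)

variable {x : ℝ}

theorem summable_zpow_sq (hx : |x| < 1) : Summable fun k : ℤ ↦ x ^ (k ^ 2) := by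
  rcases eq_or_ne x 0 with rfl | hx₀
  · exact (hasSum_single 0 fun k hk ↦ zero_zpow _ (pow_ne_zero 2 hk)).summable
  · have h := summable_zpow_sq_mul_zpow_s18 (abs_pos.mpr hx₀) hx one_pos
    simp only [one_zpow, mul_one] at h
    exact .of_norm (h.congr fun k ↦ (norm_zpow x _).symm)

theorem tendsto_thetaNome_zero : Tendsto thetaNome (𝓝 0) (𝓝 1) := by
  have hzero : ∑' k : ℤ, (0 : ℝ) ^ (k ^ 2) = 1 := by
    rw [tsum_eq_single 0 fun k hk ↦ zero_zpow _ (pow_ne_zero 2 hk)]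
    simp
  rw [← hzero]
  refine tendsto_tsum_of_dominated_convergence (bound := fun k : ℤ ↦ (1 / 2 : ℝ) ^ (k ^ 2))
    (summable_zpow_sq (by norm_num [abs_of_pos]))
    (fun k ↦ continuousAt_zpow₀ _ _ (.inr (sq_nonneg k))) ?_
  filter_upwards [Metric.ball_mem_nhds (0 : ℝ) one_half_pos] with x hx k
  rw [norm_zpow]
  obtain ⟨n, hn⟩ := Int.eq_ofNat_of_zero_le (sq_nonneg k)
  simpa only [hn, zpow_natCast] using
    pow_le_pow_left₀ (norm_nonneg x) (mem_ball_zero_iff.mp hx).le n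

theorem thetaNome_eq_qPochR (hx : |x| < 1) :
    thetaNome x = qPochR (x ^ 2) (x ^ 2) * qPochR (-x) (x ^ 2) ^ 2 := by
  simpa only [one_zpow, mul_one, inv_one, neg_one_mul, ← sq, thetaNome] using
    tsum_zpow_sq_mul_zpow hx one_ne_zero

theorem thetaNome_pos (hx : |x| < 1) : 0 < thetaNome x := by
  have hy : x ^ 2 < 1 := (sq_lt_one_iff_abs_lt_one x).mpr hx
  rw [thetaNome_eq_qPochR hx]
  exact mul_pos (qPochR_pos hy (sq_nonneg x) hy)
    (pow_pos (qPochR_pos (by linarith [neg_lt_of_abs_lt hx]) (sq_nonneg x) hy) 2)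

theorem thetaNome_neg_eq_qPochR (hx : |x| < 1) :
    thetaNome (-x) = qPochR (x ^ 2) (x ^ 2) * qPochR x (x ^ 2) ^ 2 := by
  rw [thetaNome_eq_qPochR (by rwa [abs_neg]), neg_sq, neg_neg]

theorem thetaNome_neg_mul_qPochR (hx : |x| < 1) :
    thetaNome (-x) * qPochR (x ^ 2) (x ^ 2) = qPochR x x ^ 2 := by
  rw [thetaNome_neg_eq_qPochR hx, qPochR_eq_mul_sq x hx, ← sq x]
  ring

theorem thetaNome_neg_mul_qPochR_neg (hx₀ : 0 ≤ x) (hx₁ : x < 1) :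
    thetaNome (-x) * qPochR (-x) x = qPochR x x := by
  have hx : |x| < 1 := abs_lt.mpr ⟨by linarith, hx₁⟩
  refine mul_right_cancel₀ (qPochR_pos hx₁ hx₀ hx₁).ne' ?_
  rw [mul_assoc, qPochR_neg_mul_qPochR x hx, thetaNome_neg_mul_qPochR hx, sq]

theorem thetaNome_mul_thetaNome_neg (hx : |x| < 1) :
    thetaNome x * thetaNome (-x) = thetaNome (-x ^ 2) ^ 2 := by
  rw [thetaNome_eq_qPochR hx, thetaNome_neg_eq_qPochR hx,
    thetaNome_neg_eq_qPochR (abs_sq_lt_one hx), qPochR_eq_mul_sq (x ^ 2) (abs_sq_lt_one hx),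
    ← qPochR_neg_mul_qPochR x (abs_sq_lt_one hx), ← sq (x ^ 2)]
  ring

theorem thetaNome_add_thetaNome_neg (hx : |x| < 1) :
    thetaNome x + thetaNome (-x) = 2 * thetaNome (x ^ 4) := by
  have hinj : Function.Injective fun k : ℤ ↦ 2 * k := fun a b h ↦ by simpa using h
  rw [thetaNome, thetaNome, ← (summable_zpow_sq hx).tsum_add
    (summable_zpow_sq (by rwa [abs_neg])), ← hinj.tsum_eq, thetaNome, ← tsum_mul_left]
  · congr! 2 with k
    rw [((even_two_mul k).pow_of_ne_zero two_ne_zero).neg_zpow, ← two_mul, mul_pow, zpow_mul]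
    rfl
  · refine Function.support_subset_iff'.mpr fun k hk ↦ ?_
    have hodd : Odd k := Int.not_even_iff_odd.mp fun ⟨m, hm⟩ ↦ hk ⟨m, by lia⟩
    rw [hodd.pow.neg_zpow, add_neg_cancel]

theorem thetaNome_sub_thetaNome_neg (hx : |x| < 1) :
    thetaNome x - thetaNome (-x) =
      4 * x * (qPochR (x ^ 8) (x ^ 8) * qPochR (-x ^ 8) (x ^ 8) ^ 2) := by
  rcases eq_or_ne x 0 with rfl | hx₀
  · simp
  have hinj : Function.Injective fun k : ℤ ↦ 2 * k + 1 := fun a b h ↦ by simpa using h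
  have hodd (k : ℤ) : x ^ ((2 * k + 1) ^ 2) - (-x) ^ ((2 * k + 1) ^ 2) =
      2 * x * ((x ^ 4) ^ (k ^ 2) * (x ^ 4) ^ k) := by
    rw [(odd_two_mul_add_one k).pow.neg_zpow, show (2 * k + 1) ^ 2 = 4 * k ^ 2 + 4 * k + 1 by ring,
      zpow_add_one₀ hx₀, zpow_add₀ hx₀, zpow_mul, zpow_mul, zpow_ofNat]
    ring
  have hx4 : |x ^ 4| < 1 := by
    simpa only [← pow_mul] using abs_sq_lt_one (abs_sq_lt_one hx)
  have hx8 : |x ^ 8| < 1 := by simpa only [← pow_mul] using abs_sq_lt_one hx4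
  rw [thetaNome, thetaNome, ← (summable_zpow_sq hx).tsum_sub
    (summable_zpow_sq (by rwa [abs_neg])), ← hinj.tsum_eq]
  · simp only [hodd]
    rw [tsum_mul_left, tsum_zpow_sq_mul_zpow hx4 (pow_ne_zero 4 hx₀), neg_mul (x ^ 4)⁻¹,
      inv_mul_cancel₀ (pow_ne_zero 4 hx₀), neg_mul, ← sq, ← pow_mul, qPochR_eq_one_sub_mul (-1) hx8]
    ring_nf
  · refine Function.support_subset_iff'.mpr fun k hk ↦ ?_
    have heven : Even k := Int.not_odd_iff_even.mp fun ⟨m, hm⟩ ↦ hk ⟨m, hm.symm⟩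
    rw [(heven.pow_of_ne_zero two_ne_zero).neg_zpow, sub_self]

theorem tsum_eq_tsum_add_sub {f : ℤ × ℤ → ℝ} (hf : ∀ m n, Odd (m + n) → f (m, n) = 0) :
    ∑' p, f p = ∑' p : ℤ × ℤ, f (p.1 + p.2, p.1 - p.2) := by
  have hinj : Function.Injective fun p : ℤ × ℤ ↦ (p.1 + p.2, p.1 - p.2) := by
    rintro ⟨a, b⟩ ⟨c, d⟩ h
    simp only [Prod.mk.injEq] at h ⊢
    lia
  refine (hinj.tsum_eq (Function.support_subset_iff'.mpr fun ⟨m, n⟩ hmn ↦ hf m n ?_)).symm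
  refine Int.not_even_iff_odd.mp fun ⟨r, hr⟩ ↦ hmn ⟨(r, m - r), ?_⟩
  simp only [Prod.mk.injEq]
  lia

theorem zpow_sq_mul_zpow_sq (x : ℝ) (m n : ℤ) :
    x ^ (m ^ 2) * x ^ (n ^ 2) = x ^ (m ^ 2 + n ^ 2) := by
  refine (zpow_add' ?_).symm
  have := sq_nonneg m
  have := sq_nonneg n
  lia

theorem hasSum_thetaNome_sq (hx : |x| < 1) :
    HasSum (fun p : ℤ × ℤ ↦ x ^ (p.1 ^ 2 + p.2 ^ 2)) (thetaNome x ^ 2) := by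
  have hsum := summable_zpow_sq hx
  have htheta : HasSum (fun k : ℤ ↦ x ^ (k ^ 2)) (thetaNome x) := hsum.hasSum
  have hsum_mul := summable_mul_of_summable_norm hsum.norm hsum.norm
  simpa only [zpow_sq_mul_zpow_sq, ← sq (thetaNome x)] using htheta.mul htheta hsum_mul

theorem thetaNome_sq_add_sq (hx : |x| < 1) :
    thetaNome x ^ 2 + thetaNome (-x) ^ 2 = 2 * thetaNome (x ^ 2) ^ 2 := by
  rw [← ((hasSum_thetaNome_sq hx).add (hasSum_thetaNome_sq (by rwa [abs_neg]))).tsum_eq,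
    tsum_eq_tsum_add_sub, ← (hasSum_thetaNome_sq (abs_sq_lt_one hx)).tsum_eq, ← tsum_mul_left]
  · congr! 2 with ⟨u, v⟩
    rw [show (u + v) ^ 2 + (u - v) ^ 2 = 2 * (u ^ 2 + v ^ 2) by ring,
      (even_two_mul _).neg_zpow, zpow_mul, ← two_mul]
    rfl
  · intro m n hodd
    rw [Odd.neg_zpow (by simpa [parity_simps] using hodd), add_neg_cancel]

theorem thetaNome_pow_four_sub (hx : |x| < 1) :
    thetaNome x ^ 4 - thetaNome (-x) ^ 4 = 16 * x * (thetaNome (x ^ 2) ^ 2 * thetaNome (x ^ 4) *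
      (qPochR (x ^ 8) (x ^ 8) * qPochR (-x ^ 8) (x ^ 8) ^ 2)) := by
  calc thetaNome x ^ 4 - thetaNome (-x) ^ 4
    _ = (thetaNome x ^ 2 + thetaNome (-x) ^ 2) * (thetaNome x + thetaNome (-x)) *
        (thetaNome x - thetaNome (-x)) := by ring
    _ = _ := by
      rw [thetaNome_sq_add_sq hx, thetaNome_add_thetaNome_neg hx, thetaNome_sub_thetaNome_neg hx]
      ring

/-- The theta form of the product formula for the modular discriminant. -/
theorem thetaNome_pow_four_mul_sub (hx : |x| < 1) :
    thetaNome x ^ 4 * thetaNome (-x) ^ 4 * (thetaNome x ^ 4 - thetaNome (-x) ^ 4) =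
      16 * x * qPochR (x ^ 2) (x ^ 2) ^ 12 := by
  have hx2 := abs_sq_lt_one hx
  have hx4 := abs_sq_lt_one hx2
  have hx8 : x ^ 8 < 1 := by
    simpa only [← pow_mul] using (le_abs_self _).trans_lt (abs_sq_lt_one hx4)
  have hθ₁ := thetaNome_mul_thetaNome_neg hx
  have hθ₂ := thetaNome_mul_thetaNome_neg hx2
  have hθ₄ := thetaNome_mul_thetaNome_neg hx4
  have hE₂ := thetaNome_neg_mul_qPochR hx2
  have hE₄ := thetaNome_neg_mul_qPochR hx4
  have hE₈ := thetaNome_neg_mul_qPochR_neg (by positivity) hx8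
  simp only [← pow_mul, Nat.reduceMul] at hθ₁ hθ₂ hθ₄ hE₂ hE₄
  calc thetaNome x ^ 4 * thetaNome (-x) ^ 4 * (thetaNome x ^ 4 - thetaNome (-x) ^ 4)
    _ = 16 * x * ((thetaNome x * thetaNome (-x)) ^ 4 * thetaNome (x ^ 2) ^ 2 * thetaNome (x ^ 4) *
        (qPochR (x ^ 8) (x ^ 8) * qPochR (-x ^ 8) (x ^ 8) ^ 2)) := by
      rw [thetaNome_pow_four_sub hx]
      ring
    _ = 16 * x * (thetaNome (-x ^ 2) ^ 6 * (thetaNome (x ^ 2) * thetaNome (-x ^ 2)) ^ 2 *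
        thetaNome (x ^ 4) * (qPochR (x ^ 8) (x ^ 8) * qPochR (-x ^ 8) (x ^ 8) ^ 2)) := by
      rw [hθ₁]
      ring
    _ = 16 * x * (thetaNome (-x ^ 2) ^ 6 * thetaNome (-x ^ 4) ^ 3 *
        (thetaNome (x ^ 4) * thetaNome (-x ^ 4)) *
        (qPochR (x ^ 8) (x ^ 8) * qPochR (-x ^ 8) (x ^ 8) ^ 2)) := by
      rw [hθ₂]
      ring
    _ = 16 * x * (thetaNome (-x ^ 2) ^ 6 * thetaNome (-x ^ 4) ^ 3 * qPochR (x ^ 8) (x ^ 8) *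
        (thetaNome (-x ^ 8) * qPochR (-x ^ 8) (x ^ 8)) ^ 2) := by
      rw [hθ₄]
      ring
    _ = 16 * x * (thetaNome (-x ^ 2) ^ 6 *
        (thetaNome (-x ^ 4) * qPochR (x ^ 8) (x ^ 8)) ^ 3) := by
      rw [hE₈]
      ring
    _ = 16 * x * (thetaNome (-x ^ 2) * qPochR (x ^ 4) (x ^ 4)) ^ 6 := by
      rw [hE₄]
      ring
    _ = 16 * x * qPochR (x ^ 2) (x ^ 2) ^ 12 := by
      rw [hE₂, ← pow_mul]

theorem thetaNome_exp_neg_pi_mul (t : ℝ) :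
    thetaNome (exp (-π * t)) = ∑' k : ℤ, exp (-π * t * (k : ℝ) ^ 2) := by
  refine tsum_congr fun k ↦ ?_
  rw [← Real.rpow_intCast, ← Real.exp_mul, Int.cast_pow]

theorem thetaNome_exp_neg_pi_mul_eq_inv {t : ℝ} (ht : 0 < t) :
    thetaNome (exp (-π * t)) = (√t)⁻¹ * thetaNome (exp (-π * t⁻¹)) := by
  rw [thetaNome_exp_neg_pi_mul, thetaNome_exp_neg_pi_mul, Real.tsum_exp_neg_mul_int_sq ht,
    Real.sqrt_eq_rpow, one_div (t ^ _), div_eq_mul_inv (-π)]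

end Theta

section ArithmeticGeometricMean

open scoped NNReal

/-- The complete elliptic integral `∫ dt / √((t² + a²) (t² + b²))` over the real line, which for
positive `a` and `b` is `π` divided by their arithmetic-geometric mean. -/
noncomputable def agmIntegral (a b : ℝ) : ℝ :=
  ∫ t : ℝ, (√((t ^ 2 + a ^ 2) * (t ^ 2 + b ^ 2)))⁻¹

theorem agmIntegral_eq_two_mul (a b : ℝ) :
    agmIntegral a b = 2 * ∫ t in Ioi (0 : ℝ), (√((t ^ 2 + a ^ 2) * (t ^ 2 + b ^ 2)))⁻¹ := by
  rw [← integral_comp_abs (f := fun t : ℝ ↦ (√((t ^ 2 + a ^ 2) * (t ^ 2 + b ^ 2)))⁻¹), agmIntegral]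
  simp only [sq_abs]

theorem inv_sq_add_sq_eq {c : ℝ} (hc : c ≠ 0) (t : ℝ) :
    (t ^ 2 + c ^ 2)⁻¹ = (c ^ 2)⁻¹ * (1 + (c⁻¹ * t) ^ 2)⁻¹ := by
  rw [← mul_inv]
  congr 1
  field_simp
  ring

theorem integrable_inv_sq_add_sq {c : ℝ} (hc : c ≠ 0) :
    Integrable fun t : ℝ ↦ (t ^ 2 + c ^ 2)⁻¹ := by
  simp only [inv_sq_add_sq_eq hc]
  exact (integrable_inv_one_add_sq.comp_mul_left' (inv_ne_zero hc)).const_mul _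

theorem integral_univ_inv_sq_add_sq {c : ℝ} (hc : 0 < c) :
    ∫ t : ℝ, (t ^ 2 + c ^ 2)⁻¹ = π / c := by
  simp only [inv_sq_add_sq_eq hc.ne']
  rw [integral_const_mul, Measure.integral_comp_mul_left (fun t : ℝ ↦ (1 + t ^ 2)⁻¹),
    integral_univ_inv_one_add_sq, inv_inv, abs_of_pos hc, smul_eq_mul]
  field_simp

theorem inv_sqrt_le_inv_sq_add_sq {m a b : ℝ} (hm : 0 < m) (ha : m ≤ a) (hb : m ≤ b) (t : ℝ) :
    (√((t ^ 2 + a ^ 2) * (t ^ 2 + b ^ 2)))⁻¹ ≤ (t ^ 2 + m ^ 2)⁻¹ := by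
  refine inv_anti₀ (by positivity) (Real.le_sqrt_of_sq_le ?_)
  rw [sq (_ + _)]
  gcongr

theorem inv_sq_add_sq_le_inv_sqrt {M a b : ℝ} (ha₀ : 0 < a) (hb₀ : 0 < b) (ha : a ≤ M)
    (hb : b ≤ M) (t : ℝ) :
    (t ^ 2 + M ^ 2)⁻¹ ≤ (√((t ^ 2 + a ^ 2) * (t ^ 2 + b ^ 2)))⁻¹ := by
  refine inv_anti₀ (by positivity) (Real.sqrt_le_iff.mpr ⟨by positivity, ?_⟩)
  rw [sq (_ + _)]
  gcongr

theorem integrable_inv_sqrt_mul {a b : ℝ} (ha : 0 < a) (hb : 0 < b) :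
    Integrable fun t : ℝ ↦ (√((t ^ 2 + a ^ 2) * (t ^ 2 + b ^ 2)))⁻¹ := by
  have hm : 0 < min a b := lt_min ha hb
  refine (integrable_inv_sq_add_sq hm.ne').mono' (by fun_prop) (.of_forall fun t ↦ ?_)
  rw [Real.norm_of_nonneg (by positivity)]
  exact inv_sqrt_le_inv_sq_add_sq hm (min_le_left _ _) (min_le_right _ _) t

theorem agmIntegral_le_pi_div {m a b : ℝ} (hm : 0 < m) (ha : m ≤ a) (hb : m ≤ b) :
    agmIntegral a b ≤ π / m := by
  rw [← integral_univ_inv_sq_add_sq hm]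
  exact integral_mono (integrable_inv_sqrt_mul (hm.trans_le ha) (hm.trans_le hb))
    (integrable_inv_sq_add_sq hm.ne') (inv_sqrt_le_inv_sq_add_sq hm ha hb)

theorem pi_div_le_agmIntegral {M a b : ℝ} (ha₀ : 0 < a) (hb₀ : 0 < b) (ha : a ≤ M) (hb : b ≤ M) :
    π / M ≤ agmIntegral a b := by
  have hM : 0 < M := ha₀.trans_le ha
  rw [← integral_univ_inv_sq_add_sq hM]
  exact integral_mono (integrable_inv_sq_add_sq hM.ne') (integrable_inv_sqrt_mul ha₀ hb₀)
    (inv_sq_add_sq_le_inv_sqrt ha₀ hb₀ ha hb)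

theorem image_sub_const_div_Ioi {c : ℝ} (hc : 0 < c) :
    (fun t : ℝ ↦ (t - c / t) / 2) '' Ioi 0 = univ := by
  refine eq_univ_of_forall fun u ↦ ?_
  have hsq : √(u ^ 2 + c) ^ 2 = u ^ 2 + c := Real.sq_sqrt (by positivity)
  have hpos : 0 < u + √(u ^ 2 + c) := by
    have : |u| < √(u ^ 2 + c) := Real.lt_sqrt_of_sq_lt (by rw [sq_abs]; linarith)
    linarith [neg_abs_le u]
  refine ⟨u + √(u ^ 2 + c), hpos, ?_⟩
  have hne := hpos.ne'
  field_simp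
  linear_combination hsq

theorem monotoneOn_sub_const_div {c : ℝ} (hc : 0 ≤ c) :
    MonotoneOn (fun t : ℝ ↦ (t - c / t) / 2) (Ioi 0) := by
  intro s (hs : 0 < s) t _ hst
  dsimp only
  gcongr

theorem hasDerivAt_sub_const_div (c : ℝ) {t : ℝ} (ht : t ≠ 0) :
    HasDerivAt (fun t : ℝ ↦ (t - c / t) / 2) ((t ^ 2 + c) / (2 * t ^ 2)) t := by
  refine (((hasDerivAt_id t).sub ((hasDerivAt_inv ht).const_mul c)).div_const 2).congr_deriv ?_
  field_simp
  ring

theorem sqrt_landen {a b t : ℝ} (hab : 0 ≤ a * b) (ht : 0 < t) :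
    √((((t - a * b / t) / 2) ^ 2 + √(a * b) ^ 2) *
        (((t - a * b / t) / 2) ^ 2 + ((a + b) / 2) ^ 2)) =
      (t ^ 2 + a * b) / (4 * t ^ 2) * √((t ^ 2 + a ^ 2) * (t ^ 2 + b ^ 2)) := by
  have h : (((t - a * b / t) / 2) ^ 2 + a * b) * (((t - a * b / t) / 2) ^ 2 + ((a + b) / 2) ^ 2) =
      ((t ^ 2 + a * b) / (4 * t ^ 2)) ^ 2 * ((t ^ 2 + a ^ 2) * (t ^ 2 + b ^ 2)) := by
    field_simp
    ring
  rw [Real.sq_sqrt hab, h, Real.sqrt_mul (by positivity), Real.sqrt_sq (by positivity)]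

/-- Gauss's form of Landen's transformation, by the substitution `u = (t - a b / t) / 2`. -/
theorem agmIntegral_sqrt_mul_add_div_two {a b : ℝ} (ha : 0 < a) (hb : 0 < b) :
    agmIntegral √(a * b) ((a + b) / 2) = agmIntegral a b := by
  have hab : 0 < a * b := mul_pos ha hb
  rw [agmIntegral_eq_two_mul a b, agmIntegral, ← setIntegral_univ, ← image_sub_const_div_Ioi hab,
    integral_image_eq_integral_deriv_smul_of_monotoneOn measurableSet_Ioi
      (fun t ht ↦ (hasDerivAt_sub_const_div (a * b) (ne_of_gt ht)).hasDerivWithinAt)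
      (monotoneOn_sub_const_div hab.le), ← integral_const_mul]
  refine setIntegral_congr_fun measurableSet_Ioi fun t (ht : 0 < t) ↦ ?_
  rw [sqrt_landen hab.le ht, smul_eq_mul]
  field_simp
  norm_num

theorem agmIntegral_agmSequences {x y : ℝ≥0} (hx : 0 < x) (hy : 0 < y) (n : ℕ) :
    agmIntegral (NNReal.agmSequences x y n).1 (NNReal.agmSequences x y n).2 = agmIntegral x y := by
  induction n generalizing x y with
  | zero =>
    simpa [NNReal.agmSequences_zero] using
      agmIntegral_sqrt_mul_add_div_two (NNReal.coe_pos.mpr hx) (NNReal.coe_pos.mpr hy)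
  | succ n ih =>
    rw [NNReal.agmSequences_succ, ih (by positivity) (by positivity)]
    simpa using agmIntegral_sqrt_mul_add_div_two (NNReal.coe_pos.mpr hx) (NNReal.coe_pos.mpr hy)

theorem agmSequences_fst_pos {x y : ℝ≥0} (hx : 0 < x) (hy : 0 < y) (n : ℕ) :
    0 < (NNReal.agmSequences x y n).1 :=
  (NNReal.sqrt_pos.mpr (mul_pos hx hy)).trans_le (NNReal.agmSequences_fst_monotone n.zero_le)

theorem agmIntegral_eq_pi_div_agm {x y : ℝ≥0} (hx : 0 < x) (hy : 0 < y) :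
    agmIntegral x y = π / NNReal.agm x y := by
  have hagm : (NNReal.agm x y : ℝ) ≠ 0 := NNReal.coe_ne_zero.mpr (NNReal.agm_pos hx hy).ne'
  have hpos (n : ℕ) : (0 : ℝ) < (NNReal.agmSequences x y n).1 :=
    NNReal.coe_pos.mpr (agmSequences_fst_pos hx hy n)
  have hle (n : ℕ) : ((NNReal.agmSequences x y n).1 : ℝ) ≤ (NNReal.agmSequences x y n).2 :=
    NNReal.coe_le_coe.mpr (NNReal.agmSequences_fst_le_snd n n)
  have hfst := tendsto_const_nhds (x := π) |>.div
    (NNReal.tendsto_coe.mpr (NNReal.tendsto_agmSequences_fst_agm (x := x) (y := y))) hagm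
  have hsnd := tendsto_const_nhds (x := π) |>.div
    (NNReal.tendsto_coe.mpr (NNReal.tendsto_agmSequences_snd_agm (x := x) (y := y))) hagm
  refine le_antisymm (ge_of_tendsto' hfst fun n ↦ ?_) (le_of_tendsto' hsnd fun n ↦ ?_)
  · rw [← agmIntegral_agmSequences hx hy n]
    exact agmIntegral_le_pi_div (hpos n) le_rfl (hle n)
  · rw [← agmIntegral_agmSequences hx hy n]
    exact pi_div_le_agmIntegral (hpos n) ((hpos n).trans_le (hle n)) (hle n) le_rfl

theorem beta_eq_integral_Ioo {α β : ℝ} (hα : 0 < α) (hβ : 0 < β) :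
    ProbabilityTheory.beta α β = ∫ u in Ioo (0 : ℝ) 1, u ^ (α - 1) * (1 - u) ^ (β - 1) := by
  rw [ProbabilityTheory.beta_eq_betaIntegralReal α β hα hβ, Complex.betaIntegral,
    intervalIntegral.integral_of_le zero_le_one, ← integral_Ioc_eq_integral_Ioo,
    ← Complex.ofReal_re (∫ u in Ioc (0 : ℝ) 1, _), ← integral_complex_ofReal]
  congr 1
  refine setIntegral_congr_fun measurableSet_Ioc fun u hu ↦ ?_
  push_cast
  rw [Complex.ofReal_cpow hu.1.le, Complex.ofReal_cpow (sub_nonneg.mpr hu.2)]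
  push_cast
  rfl

theorem image_inv_one_add_sq_sq_Ioi :
    (fun t : ℝ ↦ ((1 + t ^ 2) ^ 2)⁻¹) '' Ioi 0 = Ioo 0 1 := by
  ext u
  constructor
  · rintro ⟨t, ht : 0 < t, rfl⟩
    exact ⟨by positivity, inv_lt_one_of_one_lt₀ (by nlinarith [sq_pos_of_pos ht])⟩
  · rintro ⟨hu₀, hu₁⟩
    have hsqrt : 1 < (√u)⁻¹ :=
      (one_lt_inv₀ (Real.sqrt_pos.mpr hu₀)).mpr (by rw [Real.sqrt_lt' one_pos]; simpa using hu₁)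
    refine ⟨√((√u)⁻¹ - 1), Real.sqrt_pos.mpr (by linarith), ?_⟩
    dsimp only
    rw [Real.sq_sqrt (by linarith), add_sub_cancel, inv_pow, Real.sq_sqrt hu₀.le, inv_inv]

theorem antitoneOn_inv_one_add_sq_sq :
    AntitoneOn (fun t : ℝ ↦ ((1 + t ^ 2) ^ 2)⁻¹) (Ioi 0) := by
  intro s (hs : 0 < s) t _ hst
  dsimp only
  gcongr

theorem hasDerivAt_inv_one_add_sq_sq (t : ℝ) :
    HasDerivAt (fun t : ℝ ↦ ((1 + t ^ 2) ^ 2)⁻¹) (-(4 * t / (1 + t ^ 2) ^ 3)) t := by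
  refine (((((hasDerivAt_id t).pow 2).const_add 1).pow 2).inv
    (by simp only [id, Pi.pow_apply]; positivity)).congr_deriv ?_
  simp only [id, Pi.pow_apply]
  field_simp
  ring

theorem inv_one_add_sq_sq_rpow (t : ℝ) :
    (((1 + t ^ 2) ^ 2)⁻¹) ^ ((1 : ℝ) / 4 - 1) = (1 + t ^ 2) * √(1 + t ^ 2) := by
  have hs : 0 ≤ 1 + t ^ 2 := by positivity
  rw [Real.inv_rpow (by positivity), ← Real.rpow_neg (by positivity), ← Real.rpow_natCast,
    ← Real.rpow_mul hs, Real.sqrt_eq_rpow, ← Real.rpow_one_add' hs (by norm_num)]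
  norm_num

theorem one_sub_inv_one_add_sq_sq_rpow {t : ℝ} (ht : 0 < t) :
    (1 - ((1 + t ^ 2) ^ 2)⁻¹) ^ ((1 : ℝ) / 2 - 1) = (1 + t ^ 2) / (t * √(t ^ 2 + 2)) := by
  have h : 1 - ((1 + t ^ 2) ^ 2)⁻¹ = (t / (1 + t ^ 2)) ^ 2 * (t ^ 2 + 2) := by
    field_simp
    ring
  rw [h, show (1 : ℝ) / 2 - 1 = -(1 / 2) by norm_num, Real.rpow_neg (by positivity),
    ← Real.sqrt_eq_rpow, Real.sqrt_mul (by positivity), Real.sqrt_sq (by positivity)]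
  field_simp

theorem beta_integrand_comp_mul_deriv {t : ℝ} (ht : 0 < t) :
    4 * t / (1 + t ^ 2) ^ 3 * ((((1 + t ^ 2) ^ 2)⁻¹) ^ ((1 : ℝ) / 4 - 1) *
      (1 - ((1 + t ^ 2) ^ 2)⁻¹) ^ ((1 : ℝ) / 2 - 1)) =
    4 * (√((t ^ 2 + 1 ^ 2) * (t ^ 2 + √2 ^ 2)))⁻¹ := by
  rw [inv_one_add_sq_sq_rpow, one_sub_inv_one_add_sq_sq_rpow ht, Real.sq_sqrt zero_le_two,
    one_pow, Real.sqrt_mul (by positivity), add_comm (t ^ 2) 1]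
  field_simp
  rw [Real.sq_sqrt (by positivity)]

/-- The substitution is `u = (1 + t²)⁻²`. -/
theorem agmIntegral_one_sqrt_two_eq_beta :
    agmIntegral 1 √2 = ProbabilityTheory.beta (1 / 4) (1 / 2) / 2 := by
  rw [agmIntegral_eq_two_mul, beta_eq_integral_Ioo (by norm_num) (by norm_num),
    ← image_inv_one_add_sq_sq_Ioi, integral_image_eq_integral_deriv_smul_of_antitoneOn
      measurableSet_Ioi (fun t _ ↦ (hasDerivAt_inv_one_add_sq_sq t).hasDerivWithinAt)
      antitoneOn_inv_one_add_sq_sq, eq_div_iff two_ne_zero, mul_right_comm, ← integral_const_mul]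
  refine setIntegral_congr_fun measurableSet_Ioi fun t ht ↦ ?_
  rw [neg_neg, smul_eq_mul, beta_integrand_comp_mul_deriv ht]
  norm_num

theorem agmIntegral_one_sqrt_two :
    agmIntegral 1 √2 = π * √π / (√2 * Gamma (3 / 4) ^ 2) := by
  have hΓ : Gamma (3 / 4) ≠ 0 := (Real.Gamma_pos_of_pos (by norm_num)).ne'
  have hreflection : Gamma (1 / 4) * Gamma (3 / 4) = π / (√2 / 2) := by
    rw [← Real.sin_pi_div_four, div_eq_mul_one_div π 4, ← Real.Gamma_mul_Gamma_one_sub]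
    norm_num
  rw [agmIntegral_one_sqrt_two_eq_beta, ProbabilityTheory.beta,
    show (1 : ℝ) / 4 + 1 / 2 = 3 / 4 by norm_num, Real.Gamma_one_half_eq,
    eq_div_of_mul_eq hΓ hreflection]
  field_simp

theorem agm_one_sqrt_two :
    (NNReal.agm 1 (NNReal.sqrt 2) : ℝ) = √2 * Gamma (3 / 4) ^ 2 / √π := by
  have hΓ : Gamma (3 / 4) ≠ 0 := (Real.Gamma_pos_of_pos (by norm_num)).ne'
  have hagm : (NNReal.agm 1 (NNReal.sqrt 2) : ℝ) ≠ 0 :=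
    NNReal.coe_ne_zero.mpr (NNReal.agm_pos one_pos (by positivity)).ne'
  have h := agmIntegral_eq_pi_div_agm one_pos (NNReal.sqrt_pos.mpr two_pos)
  rw [NNReal.coe_one, Real.coe_sqrt, NNReal.coe_ofNat, agmIntegral_one_sqrt_two] at h
  have := Real.pi_pos
  field_simp at h ⊢
  linarith

theorem agm_thetaNome_sq_comp_sq {x : ℝ} (hx : |x| < 1) :
    NNReal.agm (‖thetaNome (x ^ 2)‖₊ ^ 2) (‖thetaNome (-x ^ 2)‖₊ ^ 2) =
      NNReal.agm (‖thetaNome x‖₊ ^ 2) (‖thetaNome (-x)‖₊ ^ 2) := by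
  have hgm : NNReal.sqrt (‖thetaNome x‖₊ ^ 2 * ‖thetaNome (-x)‖₊ ^ 2) =
      ‖thetaNome (-x ^ 2)‖₊ ^ 2 := by
    rw [← mul_pow, NNReal.sqrt_sq, ← nnnorm_mul, thetaNome_mul_thetaNome_neg hx, nnnorm_pow]
  have ham : (‖thetaNome x‖₊ ^ 2 + ‖thetaNome (-x)‖₊ ^ 2) / 2 = ‖thetaNome (x ^ 2)‖₊ ^ 2 := by
    refine NNReal.coe_injective ?_
    push_cast
    simp only [Real.norm_eq_abs, sq_abs]
    linarith [thetaNome_sq_add_sq hx]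
  rw [NNReal.agm_comm, ← hgm, ← ham, ← NNReal.agm_eq_agm_gm_am]

theorem agm_thetaNome_sq {x : ℝ} (hx : |x| < 1) :
    NNReal.agm (‖thetaNome x‖₊ ^ 2) (‖thetaNome (-x)‖₊ ^ 2) = 1 := by
  have hstep (n : ℕ) : NNReal.agm (‖thetaNome (x ^ 2 ^ n)‖₊ ^ 2) (‖thetaNome (-x ^ 2 ^ n)‖₊ ^ 2) =
      NNReal.agm (‖thetaNome x‖₊ ^ 2) (‖thetaNome (-x)‖₊ ^ 2) := by
    induction n with
    | zero => simp only [pow_zero, pow_one]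
    | succ n ih =>
      have hxn : |x ^ 2 ^ n| < 1 := by
        rw [abs_pow]
        exact pow_lt_one₀ (abs_nonneg x) hx (by positivity)
      rw [← ih, pow_succ 2, pow_mul, agm_thetaNome_sq_comp_sq hxn]
  have hlim : Tendsto (fun y : ℝ ↦ ‖thetaNome y‖₊ ^ 2) (𝓝 0) (𝓝 1) := by
    simpa using tendsto_thetaNome_zero.nnnorm.pow 2
  have hpow : Tendsto (fun n : ℕ ↦ x ^ 2 ^ n) atTop (𝓝 0) :=
    (tendsto_pow_atTop_nhds_zero_of_abs_lt_one hx).comp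
      (tendsto_pow_atTop_atTop_of_one_lt one_lt_two)
  have hpos := hlim.comp hpow
  have hneg := hlim.comp (neg_zero (G := ℝ) ▸ hpow.neg)
  refine le_antisymm (ge_of_tendsto' (max_self (1 : ℝ≥0) ▸ hpos.max hneg) fun n ↦ ?_)
    (le_of_tendsto' (min_self (1 : ℝ≥0) ▸ hpos.min hneg) fun n ↦ ?_)
  · exact (hstep n).symm.le.trans NNReal.agm_le_max
  · exact NNReal.min_le_agm.trans (hstep n).le

end ArithmeticGeometricMean

section SpecialValues

theorem abs_exp_lt_one {t : ℝ} (ht : t < 0) : |exp t| < 1 := by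
  rwa [Real.abs_exp, Real.exp_lt_one_iff]

theorem exp_neg_pi_div_two_sq : exp (-π / 2) ^ 2 = exp (-π) := by
  rw [← Real.exp_nat_mul, Nat.cast_ofNat, mul_div_cancel₀ _ two_ne_zero]

theorem abs_exp_neg_pi_lt_one : |exp (-π)| < 1 :=
  abs_exp_lt_one (neg_neg_of_pos Real.pi_pos)

theorem abs_exp_neg_pi_div_two_lt_one : |exp (-π / 2)| < 1 :=
  abs_exp_lt_one (by linarith [Real.pi_pos])

theorem thetaNome_exp_neg_pi_div_two_sq :
    thetaNome (exp (-π / 2)) ^ 2 =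
      thetaNome (exp (-π)) ^ 2 + thetaNome (-exp (-π)) ^ 2 := by
  have h := thetaNome_exp_neg_pi_mul_eq_inv (one_half_pos (α := ℝ))
  have hsq : exp (-π * (1 / 2)⁻¹) = exp (-π) ^ 2 := by
    rw [← Real.exp_nat_mul]
    norm_num [mul_comm]
  rw [hsq, mul_one_div] at h
  rw [thetaNome_sq_add_sq abs_exp_neg_pi_lt_one, h, mul_pow, inv_pow, Real.sq_sqrt (by norm_num),
    one_div, inv_inv]

theorem thetaNome_neg_exp_neg_pi_div_two_sq :
    thetaNome (-exp (-π / 2)) ^ 2 =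
      thetaNome (exp (-π)) ^ 2 - thetaNome (-exp (-π)) ^ 2 := by
  have h := thetaNome_sq_add_sq abs_exp_neg_pi_div_two_lt_one
  rw [exp_neg_pi_div_two_sq, thetaNome_exp_neg_pi_div_two_sq] at h
  linarith

theorem thetaNome_exp_neg_pi_sq_eq_sqrt_two_mul :
    thetaNome (exp (-π)) ^ 2 = √2 * thetaNome (-exp (-π)) ^ 2 := by
  have h := congrArg (· ^ 2) (thetaNome_mul_thetaNome_neg abs_exp_neg_pi_div_two_lt_one)
  rw [mul_pow, thetaNome_exp_neg_pi_div_two_sq, thetaNome_neg_exp_neg_pi_div_two_sq,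
    exp_neg_pi_div_two_sq] at h
  refine (pow_left_inj₀ (by positivity) (by positivity) two_ne_zero).mp ?_
  rw [mul_pow √2, Real.sq_sqrt zero_le_two]
  linarith

theorem thetaNome_neg_exp_neg_pi_sq :
    thetaNome (-exp (-π)) ^ 2 = √π / (√2 * Gamma (3 / 4) ^ 2) := by
  have hnnnorm : ‖thetaNome (exp (-π))‖₊ ^ 2 =
      ‖thetaNome (-exp (-π))‖₊ ^ 2 * NNReal.sqrt 2 := by
    refine NNReal.coe_injective ?_
    push_cast
    rw [Real.norm_eq_abs, Real.norm_eq_abs, sq_abs, sq_abs,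
      thetaNome_exp_neg_pi_sq_eq_sqrt_two_mul, mul_comm]
  have h := agm_thetaNome_sq abs_exp_neg_pi_lt_one
  rw [hnnnorm, ← mul_one (‖thetaNome (-_)‖₊ ^ 2), mul_assoc, one_mul, NNReal.agm_mul_distrib,
    NNReal.agm_comm] at h
  have hreal := congrArg NNReal.toReal h
  push_cast at hreal
  rw [agm_one_sqrt_two, Real.norm_eq_abs, sq_abs] at hreal
  field_simp at hreal ⊢
  exact hreal

theorem thetaNome_exp_neg_pi :
    thetaNome (exp (-π)) = π ^ ((1 : ℝ) / 4) / Gamma (3 / 4) := by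
  have : 0 < Gamma (3 / 4) := Real.Gamma_pos_of_pos (by norm_num)
  refine (pow_left_inj₀ (thetaNome_pos abs_exp_neg_pi_lt_one).le (by positivity) two_ne_zero).mp ?_
  rw [thetaNome_exp_neg_pi_sq_eq_sqrt_two_mul, thetaNome_neg_exp_neg_pi_sq, div_pow,
    ← Real.rpow_mul_natCast Real.pi_pos.le, Real.sqrt_eq_rpow π]
  norm_num
  field_simp

theorem thetaNome_neg_exp_neg_pi :
    thetaNome (-exp (-π)) = 2 ^ (-(1 : ℝ) / 4) * thetaNome (exp (-π)) := by
  have hpos := thetaNome_pos abs_exp_neg_pi_lt_one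
  have hneg := thetaNome_pos ((abs_neg _).trans_lt abs_exp_neg_pi_lt_one)
  refine (pow_left_inj₀ hneg.le (by positivity) two_ne_zero).mp ?_
  rw [mul_pow, thetaNome_exp_neg_pi_sq_eq_sqrt_two_mul, ← Real.rpow_mul_natCast zero_le_two,
    Real.sqrt_eq_rpow, ← mul_assoc, ← Real.rpow_add two_pos]
  norm_num

theorem exp_neg_two_pi : exp (-2 * π) = exp (-π) ^ 2 := by
  rw [← Real.exp_nat_mul, Nat.cast_ofNat, neg_mul_comm]

theorem exp_neg_two_pi_eq_pow_four : exp (-2 * π) = exp (-π / 2) ^ 4 := by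
  rw [exp_neg_two_pi, ← exp_neg_pi_div_two_sq, ← pow_mul]

theorem qPochR_exp_neg_two_pi :
    qPochR (exp (-2 * π)) (exp (-2 * π)) =
      2 ^ (-(1 : ℝ) / 2) * exp (π / 12) * thetaNome (exp (-π)) := by
  have hpos := thetaNome_pos abs_exp_neg_pi_lt_one
  have hq : exp (-2 * π) < 1 := Real.exp_lt_one_iff.mpr (by linarith [Real.pi_pos])
  have h2 : ((2 : ℝ) ^ (-(1 : ℝ) / 2)) ^ 12 = 64⁻¹ := by
    rw [← Real.rpow_mul_natCast zero_le_two]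
    norm_num
  have hexp : exp (-π) * exp (π / 12) ^ 12 = 1 := by
    rw [← Real.exp_nat_mul, ← Real.exp_add, Real.exp_eq_one_iff]
    push_cast
    ring
  have hdiscr := thetaNome_pow_four_mul_sub abs_exp_neg_pi_lt_one
  have hb : thetaNome (-exp (-π)) ^ 4 = thetaNome (exp (-π)) ^ 4 / 2 := by
    rw [thetaNome_neg_exp_neg_pi, mul_pow, ← Real.rpow_mul_natCast zero_le_two]
    norm_num
    ring
  rw [hb, ← exp_neg_two_pi] at hdiscr
  refine (pow_left_inj₀ (qPochR_pos hq (Real.exp_nonneg _) hq).le (by positivity)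
    (by norm_num : 12 ≠ 0)).mp ?_
  refine mul_left_cancel₀ (Real.exp_ne_zero (-π)) ?_
  rw [mul_pow, mul_pow, h2]
  linear_combination (-1 / 16) * hdiscr -
    thetaNome (exp (-π)) ^ 12 / 64 * hexp

theorem qPochR_sq_pow_four_mul {p : ℝ} (hp : |p| < 1) :
    qPochR p (p ^ 2) ^ 4 * (thetaNome (-p ^ 2) * qPochR (p ^ 4) (p ^ 4)) = thetaNome (-p) ^ 2 := by
  have h := thetaNome_neg_mul_qPochR (abs_sq_lt_one hp)
  simp only [← pow_mul, Nat.reduceMul] at h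
  rw [h, thetaNome_neg_eq_qPochR hp]
  ring

theorem qGamma_quarter_mul_qGamma_three_quarters {p : ℝ} (hp₀ : 0 ≤ p) (hp₁ : p < 1) :
    qGamma (p ^ 4) (1 / 4) * qGamma (p ^ 4) (3 / 4) =
      (1 - p ^ 4) * (qPochR (p ^ 4) (p ^ 4) ^ 2 / qPochR p (p ^ 2)) := by
  have hq : 0 < 1 - p ^ 4 := sub_pos.mpr (pow_lt_one₀ hp₀ hp₁ four_ne_zero)
  have hquarter : (p ^ 4) ^ ((1 : ℝ) / 4) = p := by
    rw [← Real.rpow_natCast_mul hp₀]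
    norm_num
  have hthree : (p ^ 4) ^ ((3 : ℝ) / 4) = p ^ 3 := by
    rw [← Real.rpow_natCast_mul hp₀, ← Real.rpow_natCast]
    norm_num
  have hpow : (1 - p ^ 4) ^ (1 - (1 : ℝ) / 4) * (1 - p ^ 4) ^ (1 - (3 : ℝ) / 4) = 1 - p ^ 4 := by
    rw [← Real.rpow_add hq]
    norm_num
  have hsplit : qPochR p (p ^ 2) = qPochR p (p ^ 4) * qPochR (p ^ 3) (p ^ 4) := by
    have h := qPochR_eq_mul_sq p (abs_sq_lt_one ((abs_of_nonneg hp₀).trans_lt hp₁))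
    rwa [← pow_mul, ← pow_succ'] at h
  rw [qGamma, qGamma, hquarter, hthree, hsplit, mul_mul_mul_comm, hpow, div_mul_div_comm, ← sq,
    mul_comm]

theorem qPochR_exp_neg_pi_div_two_pow_four :
    qPochR (exp (-π / 2)) (exp (-π)) ^ 4 =
      2 ^ ((1 : ℝ) / 4) * exp (-π / 12) * (√2 - 1) := by
  have ha := thetaNome_pos abs_exp_neg_pi_lt_one
  have h := qPochR_sq_pow_four_mul abs_exp_neg_pi_div_two_lt_one
  rw [← exp_neg_two_pi_eq_pow_four, exp_neg_pi_div_two_sq, qPochR_exp_neg_two_pi,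
    thetaNome_neg_exp_neg_pi_div_two_sq, thetaNome_neg_exp_neg_pi] at h
  have hexp : exp (-π / 12) * exp (π / 12) = 1 := by
    rw [← Real.exp_add, neg_div, neg_add_cancel, Real.exp_zero]
  have h2 : (2 : ℝ) ^ (-(1 : ℝ) / 4) * 2 ^ (-(1 : ℝ) / 2) * 2 ^ ((1 : ℝ) / 4) = √2 / 2 := by
    rw [← Real.rpow_add two_pos, ← Real.rpow_add two_pos, Real.sqrt_eq_rpow,
      ← Real.rpow_sub_one two_ne_zero]
    norm_num
  have hsq : ((2 : ℝ) ^ (-(1 : ℝ) / 4)) ^ 2 = √2 / 2 := by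
    rw [← Real.rpow_mul_natCast zero_le_two, Real.sqrt_eq_rpow, ← Real.rpow_sub_one two_ne_zero]
    norm_num
  have hsqrt := Real.sq_sqrt (zero_le_two (α := ℝ))
  rw [mul_pow, hsq] at h
  refine mul_right_cancel₀ (b := (2 : ℝ) ^ (-(1 : ℝ) / 4) * (2 ^ (-(1 : ℝ) / 2) *
    exp (π / 12)) * thetaNome (exp (-π)) ^ 2) (by positivity) ?_
  linear_combination h - thetaNome (exp (-π)) ^ 2 *
    (exp (-π / 12) * exp (π / 12) * (√2 - 1) * h2 +
      √2 / 2 * (√2 - 1) * hexp + 1 / 2 * hsqrt)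

/-- A Weber class invariant: this value of `(p; p²)_∞` is elementary. -/
theorem qPochR_exp_neg_pi_div_two :
    qPochR (exp (-π / 2)) (exp (-π)) =
      2 ^ ((1 : ℝ) / 16) * exp (-π / 48) * (√2 + 1) ^ (-(1 : ℝ) / 4) := by
  have hpos : 0 < qPochR (exp (-π / 2)) (exp (-π)) :=
    qPochR_pos (Real.exp_lt_one_iff.mpr (by linarith [Real.pi_pos])) (Real.exp_nonneg _)
      (Real.exp_lt_one_iff.mpr (by linarith [Real.pi_pos]))
  have hinv : (√2 + 1)⁻¹ = √2 - 1 :=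
    inv_eq_of_mul_eq_one_right (by linarith [Real.mul_self_sqrt (zero_le_two (α := ℝ))])
  refine (pow_left_inj₀ hpos.le (by positivity) four_ne_zero).mp ?_
  rw [qPochR_exp_neg_pi_div_two_pow_four, mul_pow, mul_pow, ← Real.rpow_mul_natCast zero_le_two,
    ← Real.rpow_mul_natCast (by positivity), ← Real.exp_nat_mul, ← hinv, ← Real.rpow_neg_one]
  push_cast
  ring_nf

theorem qPochR_sq_div_exp_neg_two_pi :
    qPochR (exp (-2 * π)) (exp (-2 * π)) ^ 2 /
        qPochR (exp (-π / 2)) (exp (-π)) =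
      thetaNome (exp (-π)) ^ 2 * 2 ^ (-(17 : ℝ) / 16) * exp (3 * π / 16) *
        (√2 + 1) ^ ((1 : ℝ) / 4) := by
  have h2 : (2 : ℝ) ^ (-(17 : ℝ) / 16) * 2 ^ ((1 : ℝ) / 16) = (2 ^ (-(1 : ℝ) / 2)) ^ 2 := by
    rw [← Real.rpow_add two_pos, ← Real.rpow_mul_natCast zero_le_two]
    norm_num
  have hexp : exp (3 * π / 16) * exp (-π / 48) =
      exp (π / 12) ^ 2 := by
    rw [← Real.exp_add, ← Real.exp_nat_mul]
    ring_nf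
  have hsilver : (√2 + 1) ^ ((1 : ℝ) / 4) * (√2 + 1) ^ (-(1 : ℝ) / 4) = 1 := by
    rw [neg_div, ← Real.rpow_add (by positivity), add_neg_cancel, Real.rpow_zero]
  rw [qPochR_exp_neg_two_pi, qPochR_exp_neg_pi_div_two, div_eq_iff (by positivity), mul_pow,
    mul_pow, ← h2, ← hexp]
  linear_combination -(2 ^ (-(17 : ℝ) / 16) * 2 ^ ((1 : ℝ) / 16) * (exp (3 * π / 16) *
    exp (-π / 48)) * thetaNome (exp (-π)) ^ 2) * hsilver

end SpecialValues

theorem qGamma_quarter_product_exp_two_pi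
    (q : ℝ) (hq : q = Real.exp (-2 * Real.pi))
    (a : ℝ) (ha : a = Real.pi ^ ((1 : ℝ) / 4) / Real.Gamma (3 / 4)) :
    qGamma q (1 / 4) * qGamma q (3 / 4) =
      (1 - Real.exp (-2 * Real.pi)) * a ^ 2 * (2 : ℝ) ^ (-(17 : ℝ) / 16) *
        Real.exp (3 * Real.pi / 16) * (Real.sqrt 2 + 1) ^ ((1 : ℝ) / 4) := by
  have hp : exp (-π / 2) < 1 := Real.exp_lt_one_iff.mpr (by linarith [Real.pi_pos])
  have hproduct := qGamma_quarter_mul_qGamma_three_quarters (Real.exp_nonneg _) hp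
  rw [← exp_neg_two_pi_eq_pow_four, exp_neg_pi_div_two_sq, qPochR_sq_div_exp_neg_two_pi,
    thetaNome_exp_neg_pi, ← ha, ← hq] at hproduct
  rw [hproduct, hq]
  ring
end
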